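/- arXiv:2006.13867 — 2 statements merged into one kernel-verified Lean document; each statement's English description precedes it below -/
import Mathlib

section
/- There is a constant c₁ > 0, depending only on n, α, Σ and w, such that w(B₁(ξ) ∩ Σ) ≥ w(B₁ ∩ Σ) + c₁ |ξ| for every nonzero ξ ∈ 𝒞 with |ξ| < c₁ and dist(ξ/|ξ|, Σ) < c₁, where w(F) = ∫_F w(x) dx denotes the weighted volume and B₁(ξ) is the open unit ball centered at ξ. -/
open MeasureTheory Metric Set
open scoped RealInnerProductSpace ENNReal NNReal Topology

noncomputable section

abbrev Euc (n : ℕ) := EuclideanSpace ℝ (Fin n)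

def IsOpenConvexCone {n : ℕ} (S : Set (Euc n)) : Prop :=
  IsOpen S ∧ Convex ℝ S ∧ ∀ x ∈ S, ∀ t : ℝ, 0 < t → t • x ∈ S

def IsAdmissibleWeight {n : ℕ} (S : Set (Euc n)) (α : ℝ) (w : Euc n → ℝ) : Prop :=
  ContinuousOn w (closure S) ∧ (∀ x ∈ closure S, 0 ≤ w x) ∧
  (∃ x ∈ closure S, w x ≠ 0) ∧
  (∀ x ∈ closure S, ∀ t : ℝ, 0 < t → w (t • x) = t ^ α * w x) ∧
  ConcaveOn ℝ S (fun x => w x ^ (1 / α))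

def wVol {n : ℕ} (w : Euc n → ℝ) (E : Set (Euc n)) : ℝ≥0∞ :=
  ∫⁻ x in E, ENNReal.ofReal (w x)

def linSpan (n k : ℕ) : Set (Euc n) := {x | ∀ i : Fin n, k ≤ (i : ℕ) → x i = 0}

/-- `𝒞`: directions orthogonal to `ℒ` along which `w` is constant. -/
def constDirs {n : ℕ} (S : Set (Euc n)) (w : Euc n → ℝ) (k : ℕ) : Set (Euc n) :=
  {v | (∀ u ∈ linSpan n k, ⟪v, u⟫ = 0) ∧
    ∀ x ∈ S, ∀ t : ℝ, x + t • v ∈ S → w (x + t • v) = w x}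

/-!
Since the weight is constant along `ξ`, translation by `ξ` preserves the weighted volume of every
part of the unit ball that stays in the cone. Hence the weighted volume changes only by the loss on
the exit layer in direction `ξ` and the gain on the exit layer in direction `-ξ`.

The loss is small: if `ξ` lies within `c‖ξ‖` of the cone, its exit layer is contained in that of a
vector of length of order `c‖ξ‖` pointing out of the cone, and a homothety bounds the volume of the
latter by a multiple of `c‖ξ‖`.

The gain is at least a fixed multiple of `‖ξ‖`: directions transverse to the lines of the cone
satisfy a uniform bound `b‖ξ‖ ≤ dist(ξ, K) + dist(-ξ, K)`, so `-ξ` is far from the cone when `ξ` is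
close to it. Moving in direction `-ξ` from a point near the vertex therefore leaves the cone after
`O(1/‖ξ‖)` steps, and so many translates of the exit layer cover a fixed neighbourhood of the
vertex, which has positive weighted volume.
-/

section ExitLayer

variable {E : Type*} [AddCommGroup E] {S : Set E} {v x : E}

/-- The part of `S` that leaves `S` under translation by `v`: the boundary layer of `S` on the
side towards which `v` points. -/
def exitLayer (S : Set E) (v : E) : Set E := {x ∈ S | x + v ∉ S}

lemma exitLayer_subset : exitLayer S v ⊆ S := fun _ hx => hx.1

lemma add_mem_of_notMem_exitLayer (hx : x ∈ S) (hxv : x ∉ exitLayer S v) : x + v ∈ S :=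
  not_not.1 fun h => hxv ⟨hx, h⟩

lemma measurableSet_exitLayer [MeasurableSpace E] [MeasurableAdd E] (hS : MeasurableSet S) :
    MeasurableSet (exitLayer S v) :=
  hS.inter (measurable_add_const v hS).compl

end ExitLayer

section OpenConvexCone

open scoped Pointwise

variable {E : Type*} [NormedAddCommGroup E] [NormedSpace ℝ E] {K : ConvexCone ℝ E}

lemma add_mem_of_mem_closure (hK : IsOpen (K : Set E)) {x y : E} (hx : x ∈ K)
    (hy : y ∈ closure (K : Set E)) : x + y ∈ K := by
  have hxy : x + y ∈ (K : Set E) + K := hK.add_closure (K : Set E) ▸ Set.add_mem_add hx hy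
  obtain ⟨a, ha, b, hb, hab⟩ := hxy
  exact hab ▸ K.add_mem ha hb

lemma add_smul_mem_of_mem_closure (hK : IsOpen (K : Set E)) {x y : E} (hx : x ∈ K)
    (hy : y ∈ closure (K : Set E)) {t : ℝ} (ht : 0 < t) : x + t • y ∈ K := by
  have h := K.smul_mem ht (add_mem_of_mem_closure hK (K.smul_mem (inv_pos.2 ht) hx) hy)
  rwa [smul_add, smul_inv_smul₀ ht.ne'] at h

lemma add_smul_mem_of_mem_closure_of_neg_mem_closure (hK : IsOpen (K : Set E)) {p v : E}
    (hp : p ∈ K) (hv : v ∈ closure (K : Set E)) (hv' : -v ∈ closure (K : Set E)) (t : ℝ) :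
    p + t • v ∈ K := by
  rcases lt_trichotomy t 0 with ht | rfl | ht
  · simpa using add_smul_mem_of_mem_closure hK hp hv' (neg_pos.2 ht)
  · simpa using hp
  · exact add_smul_mem_of_mem_closure hK hp hv ht

lemma exists_ball_one_subset (hK : IsOpen (K : Set E)) (hne : (K : Set E).Nonempty) :
    ∃ v ∈ K, ball v 1 ⊆ (K : Set E) := by
  obtain ⟨p, hp⟩ := hne
  obtain ⟨r, hr, hball⟩ := Metric.isOpen_iff.1 hK p hp
  refine ⟨r⁻¹ • p, K.smul_mem (inv_pos.2 hr) hp, fun x hx => ?_⟩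
  have hrx : r • x ∈ K := by
    refine hball ?_
    rw [mem_ball, ← smul_inv_smul₀ hr.ne' p, dist_smul₀, Real.norm_of_nonneg hr.le]
    exact mul_lt_of_lt_one_right hr hx
  simpa [inv_smul_smul₀ hr.ne'] using K.smul_mem (inv_pos.2 hr) hrx

lemma infDist_smul_of_pos {t : ℝ} (ht : 0 < t) (x : E) :
    infDist (t • x) K = t * infDist x K := by
  have hsmul : t • (K : Set E) = K := by
    refine Subset.antisymm ?_ fun x hx => ?_
    · rintro _ ⟨x, hx, rfl⟩
      exact K.smul_mem ht hx
    · exact ⟨t⁻¹ • x, K.smul_mem (inv_pos.2 ht) hx, smul_inv_smul₀ ht.ne' x⟩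
  rw [← Real.norm_of_nonneg ht.le, ← infDist_smul₀ ht.ne', hsmul, Real.norm_of_nonneg ht.le]

lemma infDist_inv_norm_smul_lt_iff {x : E} (hx : x ≠ 0) {c : ℝ} :
    infDist (‖x‖⁻¹ • x) K < c ↔ infDist x K < c * ‖x‖ := by
  have hnorm : 0 < ‖x‖ := norm_pos_iff.2 hx
  rw [infDist_smul_of_pos (inv_pos.2 hnorm), inv_mul_eq_div, div_lt_iff₀ hnorm]

lemma mul_infDist_neg_le_norm {y ξ : E} {t : ℝ} (ht : 0 ≤ t) (hy : y - t • ξ ∈ K) :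
    t * infDist (-ξ) K ≤ ‖y‖ := by
  rcases ht.eq_or_lt with rfl | ht
  · simp
  · calc t * infDist (-ξ) K = infDist (t • -ξ) K := (infDist_smul_of_pos ht _).symm
      _ ≤ dist (t • -ξ) (y - t • ξ) := infDist_le_dist_of_mem hy
      _ = ‖y‖ := by simp [dist_eq_norm']

lemma exists_mul_norm_le_infDist_add_infDist_neg [FiniteDimensional ℝ E]
    (hK : IsOpen (K : Set E)) (hne : (K : Set E).Nonempty) (V : Submodule ℝ E)
    (hV : ∀ p : E, ∀ v ∈ V, (∀ t : ℝ, p + t • v ∈ K) → v = 0) :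
    ∃ b : ℝ, 0 < b ∧ ∀ ξ ∈ V, b * ‖ξ‖ ≤ infDist ξ K + infDist (-ξ) K := by
  have hcompact : IsCompact (sphere (0 : E) 1 ∩ V) :=
    (isCompact_sphere _ _).inter_right V.closed_of_finiteDimensional
  have hcont : Continuous fun e : E => infDist e K + infDist (-e) K := by fun_prop
  have hpos : ∀ e ∈ sphere (0 : E) 1 ∩ V, 0 < infDist e K + infDist (-e) K := by
    rintro e ⟨he, heV⟩
    by_contra! hle
    have h := infDist_nonneg (x := e) (s := (K : Set E))
    have h' := infDist_nonneg (x := -e) (s := (K : Set E))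
    have hcl : e ∈ closure (K : Set E) := (mem_closure_iff_infDist_zero hne).2 (by linarith)
    have hcl' : -e ∈ closure (K : Set E) := (mem_closure_iff_infDist_zero hne).2 (by linarith)
    obtain ⟨p, hp⟩ := hne
    have he0 : e = 0 := hV p e heV (add_smul_mem_of_mem_closure_of_neg_mem_closure hK hp hcl hcl')
    simp [he0] at he
  obtain ⟨b, hb, hle⟩ := hcompact.exists_forall_le' hcont.continuousOn hpos
  refine ⟨b, hb, fun ξ hξ => ?_⟩
  rcases eq_or_ne ξ 0 with rfl | hξ0
  · rw [norm_zero, mul_zero]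
    exact add_nonneg infDist_nonneg infDist_nonneg
  · have hnorm : 0 < ‖ξ‖⁻¹ := inv_pos.2 (norm_pos_iff.2 hξ0)
    have h := hle (‖ξ‖⁻¹ • ξ) ⟨by simp [norm_smul, hξ0], V.smul_mem _ hξ⟩
    rwa [← smul_neg, infDist_smul_of_pos hnorm, infDist_smul_of_pos hnorm, ← mul_add,
      inv_mul_eq_div, le_div_iff₀ (norm_pos_iff.2 hξ0)] at h

lemma smul_add_mem_of_norm_lt {v u : E} (hv : ball v 1 ⊆ (K : Set E)) {δ : ℝ} (hu : ‖u‖ < δ) :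
    δ • v + u ∈ K := by
  have hδ : 0 < δ := (norm_nonneg u).trans_lt hu
  have hmem : v + δ⁻¹ • u ∈ K := by
    refine hv ?_
    rw [mem_ball, dist_eq_norm, add_sub_cancel_left, norm_smul, norm_inv,
      Real.norm_of_nonneg hδ.le]
    exact (inv_mul_lt_one₀ hδ).2 hu
  simpa [smul_add, smul_inv_smul₀ hδ.ne'] using K.smul_mem hδ hmem

lemma exitLayer_subset_of_infDist_lt {v ξ : E} (hv : ball v 1 ⊆ (K : Set E)) {δ : ℝ}
    (hξ : infDist ξ K < δ) : exitLayer (K : Set E) ξ ⊆ exitLayer K (-(δ • v)) := by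
  rintro x ⟨hx, hxξ⟩
  refine ⟨hx, fun hxv => hxξ ?_⟩
  obtain ⟨ξ', hξ', hdist⟩ := (infDist_lt_iff ⟨x, hx⟩).1 hξ
  rw [dist_eq_norm] at hdist
  have h := K.add_mem (K.add_mem hxv (smul_add_mem_of_norm_lt hv hdist)) hξ'
  have hsum : x + -(δ • v) + (δ • v + (ξ - ξ')) + ξ' = x + ξ := by abel
  rwa [hsum] at h

end OpenConvexCone

section BoundaryLayer

open scoped Pointwise

variable {E : Type*} [NormedAddCommGroup E] [NormedSpace ℝ E] [FiniteDimensional ℝ E]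
  [MeasurableSpace E] [BorelSpace E] {K : ConvexCone ℝ E} {μ : Measure E} [μ.IsAddHaarMeasure]

local notation "dim" => Module.finrank ℝ E

lemma pow_mul_measure_le_measure_sdiff_exitLayer {v : E} (hv : v ∈ K) (hv1 : ‖v‖ < 1) :
    ENNReal.ofReal ((1 - ‖v‖) ^ dim) * μ (ball 0 1 ∩ K) ≤
      μ ((ball 0 1 ∩ K) \ exitLayer K (-v)) := by
  have hρ : 0 < 1 - ‖v‖ := sub_pos.2 hv1
  -- The homothety `y ↦ v + (1 - ‖v‖) • y` maps the ball into itself and `K` into `v + K`.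
  have hscale : μ (v +ᵥ (1 - ‖v‖) • (ball 0 1 ∩ K : Set E)) =
      ENNReal.ofReal ((1 - ‖v‖) ^ dim) * μ (ball 0 1 ∩ K) := by
    rw [measure_vadd, Measure.addHaar_smul_of_nonneg _ hρ.le]
  rw [← hscale]
  refine measure_mono ?_
  rintro _ ⟨_, ⟨y, ⟨hyball, hyK⟩, rfl⟩, rfl⟩
  have hy := K.smul_mem hρ hyK
  refine ⟨⟨?_, K.add_mem hv hy⟩, fun hexit => hexit.2 (by simpa using hy)⟩
  rw [mem_ball_zero_iff] at hyball ⊢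
  calc ‖v + (1 - ‖v‖) • y‖ ≤ ‖v‖ + (1 - ‖v‖) * ‖y‖ := by
        simpa [norm_smul, abs_of_pos hρ] using norm_add_le v ((1 - ‖v‖) • y)
    _ < ‖v‖ + (1 - ‖v‖) * 1 := by gcongr
    _ = 1 := by ring

lemma measure_ball_inter_exitLayer_neg_le (hK : MeasurableSet (K : Set E)) {v : E} (hv : v ∈ K) :
    μ (ball 0 1 ∩ exitLayer K (-v)) ≤
      ENNReal.ofReal (dim * ‖v‖) * μ (ball 0 1 ∩ K) := by
  have hsub : ball 0 1 ∩ exitLayer (K : Set E) (-v) = (ball 0 1 ∩ K) ∩ exitLayer K (-v) := by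
    rw [inter_assoc, inter_eq_self_of_subset_right exitLayer_subset]
  rw [hsub]
  rcases lt_or_ge ‖v‖ 1 with hv1 | hv1
  · have hfin : μ (ball 0 1 ∩ K) ≠ ⊤ := measure_ne_top_of_subset inter_subset_left
      measure_ball_lt_top.ne
    have hbernoulli : 1 ≤ (1 - ‖v‖) ^ dim + dim * ‖v‖ := by
      have := one_add_mul_le_pow (a := -‖v‖) (by linarith) dim
      rw [← sub_eq_add_neg] at this
      linarith
    have hgood := ENNReal.mul_ne_top (ENNReal.ofReal_ne_top (r := (1 - ‖v‖) ^ dim)) hfin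
    refine (ENNReal.add_le_add_iff_left hgood).1 ?_
    calc _ ≤ μ ((ball 0 1 ∩ K) \ exitLayer K (-v)) + μ ((ball 0 1 ∩ K) ∩ exitLayer K (-v)) := by
          gcongr
          exact pow_mul_measure_le_measure_sdiff_exitLayer hv hv1
      _ = 1 * μ (ball 0 1 ∩ K) := by
          rw [measure_sdiff_add_inter _ (measurableSet_exitLayer hK), one_mul]
      _ ≤ _ := by
          have : 0 ≤ 1 - ‖v‖ := by linarith
          rw [← add_mul, ← ENNReal.ofReal_add (by positivity) (by positivity)]
          gcongr
          exact ENNReal.one_le_ofReal.2 hbernoulli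
  · have : Nontrivial E := nontrivial_of_ne v 0 (norm_pos_iff.1 (by linarith))
    have hdim : (1 : ℝ) ≤ dim := by exact_mod_cast Module.finrank_pos (R := ℝ) (M := E)
    calc μ ((ball 0 1 ∩ K) ∩ exitLayer K (-v)) ≤ 1 * μ (ball 0 1 ∩ K) := by
          rw [one_mul]
          exact measure_mono inter_subset_left
      _ ≤ _ := by
          gcongr
          exact ENNReal.one_le_ofReal.2 (one_le_mul_of_one_le_of_one_le hdim hv1)

lemma exists_setLIntegral_exitLayer_le (hK : IsOpen (K : Set E)) (hne : (K : Set E).Nonempty)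
    {g : E → ℝ≥0∞} {M : ℝ≥0} (hM : ∀ x ∈ ball 0 1 ∩ (K : Set E), g x ≤ M) :
    ∃ C : ℝ≥0∞, C ≠ ⊤ ∧ ∀ ξ : E, ∀ δ : ℝ, infDist ξ K < δ →
      ∫⁻ x in ball 0 1 ∩ exitLayer K ξ, g x ∂μ ≤ C * ENNReal.ofReal δ := by
  obtain ⟨v, hvK, hv⟩ := exists_ball_one_subset hK hne
  have hfin : μ (ball 0 1 ∩ K) ≠ ⊤ := measure_ne_top_of_subset inter_subset_left
    measure_ball_lt_top.ne
  refine ⟨M * (ENNReal.ofReal (dim * ‖v‖) * μ (ball 0 1 ∩ K)),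
    ENNReal.mul_ne_top ENNReal.coe_ne_top (ENNReal.mul_ne_top ENNReal.ofReal_ne_top hfin),
    fun ξ δ hξ => ?_⟩
  have hδ : 0 < δ := infDist_nonneg.trans_lt hξ
  calc ∫⁻ x in ball 0 1 ∩ exitLayer K ξ, g x ∂μ
      ≤ ∫⁻ _ in ball 0 1 ∩ exitLayer K ξ, M ∂μ :=
        setLIntegral_mono measurable_const fun x hx => hM x ⟨hx.1, exitLayer_subset hx.2⟩
    _ = M * μ (ball 0 1 ∩ exitLayer K ξ) := setLIntegral_const _ _
    _ ≤ M * μ (ball 0 1 ∩ exitLayer K (-(δ • v))) := by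
        gcongr
        exact exitLayer_subset_of_infDist_lt hv hξ
    _ ≤ M * (ENNReal.ofReal (dim * ‖δ • v‖) * μ (ball 0 1 ∩ K)) := by
        gcongr
        exact measure_ball_inter_exitLayer_neg_le hK.measurableSet (K.smul_mem hδ hvK)
    _ = _ := by
        rw [norm_smul, Real.norm_of_nonneg hδ.le, mul_left_comm (dim : ℝ), ENNReal.ofReal_mul hδ.le]
        ring

end BoundaryLayer

/-- `g` takes equal values at any two points of `S` whose difference is a multiple of `ξ`; this
is the condition that the constancy directions of a weight satisfy. -/
def IsConstantAlong {E β : Type*} [AddCommGroup E] [Module ℝ E] (g : E → β) (S : Set E) (ξ : E) :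
    Prop :=
  ∀ x ∈ S, ∀ t : ℝ, x + t • ξ ∈ S → g (x + t • ξ) = g x

namespace IsConstantAlong

section Translation

variable {E : Type*} [AddCommGroup E] [Module ℝ E] [MeasurableSpace E] [MeasurableAdd E]
  {μ : Measure E} [μ.IsAddRightInvariant] {g : E → ℝ≥0∞} {S F G : Set E} {ξ : E}

lemma setLIntegral_le_of_mapsTo (hg : IsConstantAlong g S ξ) (hF : MeasurableSet F) (hFS : F ⊆ S)
    (hGS : G ⊆ S) (t : ℝ) (hmaps : MapsTo (fun x => x + t • ξ) F G) :
    ∫⁻ x in F, g x ∂μ ≤ ∫⁻ x in G, g x ∂μ :=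
  calc ∫⁻ x in F, g x ∂μ = ∫⁻ x in F, g (x + t • ξ) ∂μ :=
        setLIntegral_congr_fun hF fun x hx => (hg x (hFS hx) t (hGS (hmaps hx))).symm
    _ ≤ ∫⁻ x in (fun x => x + t • ξ) ⁻¹' G, g (x + t • ξ) ∂μ := lintegral_mono_set hmaps
    _ = ∫⁻ x in G, g x ∂μ :=
        (measurePreserving_add_right μ (t • ξ)).setLIntegral_comp_preimage_emb
          (measurableEmbedding_addRight _) g G

lemma setLIntegral_le_mul_exitLayer (hg : IsConstantAlong g S ξ) (hS : MeasurableSet S)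
    (hF : MeasurableSet F) (hFS : F ⊆ S) (hG : MeasurableSet G) {N : ℕ}
    (hexit : ∀ y ∈ F, ∀ j : ℕ, y - (j : ℝ) • ξ ∈ S → j < N ∧ y - (j : ℝ) • ξ ∈ G) :
    ∫⁻ x in F, g x ∂μ ≤ N * ∫⁻ x in G ∩ exitLayer S (-ξ), g x ∂μ := by
  set A := G ∩ exitLayer S (-ξ)
  let F' (j : Fin N) : Set E := F ∩ (fun y => y + (-(j : ℝ)) • ξ) ⁻¹' A
  have hcover : F ⊆ ⋃ j, F' j := by
    intro y hy
    obtain ⟨j, hj, hj'⟩ := Nat.exists_not_and_succ_of_not_zero_of_exists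
      (p := fun j : ℕ => y - (j : ℝ) • ξ ∉ S) (by simpa using hFS hy)
      ⟨N, fun h => (hexit y hy N h).1.false⟩
    rw [not_not] at hj
    obtain ⟨hjN, hjG⟩ := hexit y hy j hj
    refine mem_iUnion.2 ⟨⟨j, hjN⟩, hy, ?_⟩
    rw [mem_preimage, neg_smul, ← sub_eq_add_neg]
    refine ⟨hjG, hj, ?_⟩
    rwa [Nat.cast_succ, add_smul, one_smul, ← sub_sub, sub_eq_add_neg _ ξ] at hj'
  have hle (j : Fin N) : ∫⁻ x in F' j, g x ∂μ ≤ ∫⁻ x in A, g x ∂μ :=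
    hg.setLIntegral_le_of_mapsTo
      (hF.inter (measurable_add_const _ (hG.inter (measurableSet_exitLayer hS))))
      (inter_subset_left.trans hFS) (inter_subset_right.trans exitLayer_subset) _
      inter_subset_right
  calc ∫⁻ x in F, g x ∂μ ≤ ∫⁻ x in ⋃ j, F' j, g x ∂μ := lintegral_mono_set hcover
    _ ≤ ∑' j, ∫⁻ x in F' j, g x ∂μ := lintegral_iUnion_le _ _
    _ ≤ ∑' _ : Fin N, ∫⁻ x in A, g x ∂μ := ENNReal.tsum_le_tsum hle
    _ = N * ∫⁻ x in A, g x ∂μ := by simp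

end Translation

variable {E : Type*} [NormedAddCommGroup E] [NormedSpace ℝ E] [MeasurableSpace E] [BorelSpace E]
  {μ : Measure E} [μ.IsAddRightInvariant] {g : E → ℝ≥0∞} {ξ : E}

lemma setLIntegral_ball_add_exitLayer_neg_le {S : Set E} (hg : IsConstantAlong g S ξ)
    (hS : MeasurableSet S) (hξ : ‖ξ‖ ≤ 1 / 2) :
    ∫⁻ x in ball 0 1 ∩ S, g x ∂μ + ∫⁻ x in ball 0 (1 / 2) ∩ exitLayer S (-ξ), g x ∂μ ≤
      ∫⁻ x in ball ξ 1 ∩ S, g x ∂μ + ∫⁻ x in ball 0 1 ∩ exitLayer S ξ, g x ∂μ := by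
  have hball : MeasurableSet (ball 0 1 ∩ S) := measurableSet_ball.inter hS
  have hstay : ∫⁻ x in (ball 0 1 ∩ S) \ exitLayer S ξ, g x ∂μ ≤
      ∫⁻ x in (ball ξ 1 ∩ S) \ exitLayer S (-ξ), g x ∂μ := by
    refine hg.setLIntegral_le_of_mapsTo (hball.diff (measurableSet_exitLayer hS))
      (sdiff_subset.trans inter_subset_right) (sdiff_subset.trans inter_subset_right) 1 ?_
    rintro x ⟨⟨hx, hxS⟩, hexit⟩
    simp only [one_smul]
    refine ⟨⟨?_, add_mem_of_notMem_exitLayer hxS hexit⟩, fun h => h.2 (by simpa using hxS)⟩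
    simpa [dist_eq_norm] using hx
  have hloss : ∫⁻ x in (ball 0 1 ∩ S) ∩ exitLayer S ξ, g x ∂μ ≤
      ∫⁻ x in ball 0 1 ∩ exitLayer S ξ, g x ∂μ :=
    lintegral_mono_set fun x hx => ⟨hx.1.1, hx.2⟩
  have hgain : ∫⁻ x in ball 0 (1 / 2) ∩ exitLayer S (-ξ), g x ∂μ ≤
      ∫⁻ x in (ball ξ 1 ∩ S) ∩ exitLayer S (-ξ), g x ∂μ := by
    have hsub : ball 0 (1 / 2) ⊆ ball ξ 1 := ball_subset_ball' (by simp; linarith)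
    exact lintegral_mono_set fun x hx => ⟨⟨hsub hx.1, exitLayer_subset hx.2⟩, hx.2⟩
  rw [← lintegral_inter_add_sdiff g (ball 0 1 ∩ S) (measurableSet_exitLayer (v := ξ) hS),
    ← lintegral_inter_add_sdiff g (ball ξ 1 ∩ S) (measurableSet_exitLayer (v := -ξ) hS)]
  calc _ ≤ _ := add_le_add (add_le_add hloss hstay) hgain
    _ = _ := by ring

lemma setLIntegral_ball_add_le {S : Set E} (hg : IsConstantAlong g S ξ) (hS : MeasurableSet S)
    (hξ : ‖ξ‖ ≤ 1 / 2) {C δ : ℝ≥0∞} (hC : C ≠ ⊤) (hδ : δ ≠ ⊤)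
    (hloss : ∫⁻ x in ball 0 1 ∩ exitLayer S ξ, g x ∂μ ≤ C * δ)
    (hgain : (C + 1) * δ ≤ ∫⁻ x in ball 0 (1 / 2) ∩ exitLayer S (-ξ), g x ∂μ) :
    ∫⁻ x in ball 0 1 ∩ S, g x ∂μ + δ ≤ ∫⁻ x in ball ξ 1 ∩ S, g x ∂μ := by
  refine (ENNReal.add_le_add_iff_right (ENNReal.mul_ne_top hC hδ)).1 ?_
  calc _ = ∫⁻ x in ball 0 1 ∩ S, g x ∂μ + (C + 1) * δ := by ring
    _ ≤ ∫⁻ x in ball 0 1 ∩ S, g x ∂μ + ∫⁻ x in ball 0 (1 / 2) ∩ exitLayer S (-ξ), g x ∂μ := by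
        gcongr
    _ ≤ ∫⁻ x in ball ξ 1 ∩ S, g x ∂μ + ∫⁻ x in ball 0 1 ∩ exitLayer S ξ, g x ∂μ :=
        hg.setLIntegral_ball_add_exitLayer_neg_le hS hξ
    _ ≤ _ := by gcongr

lemma mul_setLIntegral_ball_le_exitLayer_neg {K : ConvexCone ℝ E} (hg : IsConstantAlong g K ξ)
    (hK : MeasurableSet (K : Set E)) (hξ : ‖ξ‖ ≤ 1 / 2) {r : ℝ} (hr : r ≤ 1 / 4)
    (hrξ : 4 * r * ‖ξ‖ ≤ infDist (-ξ) K) :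
    ENNReal.ofReal ‖ξ‖ * ∫⁻ x in ball 0 r ∩ K, g x ∂μ ≤
      ∫⁻ x in ball 0 (1 / 2) ∩ exitLayer K (-ξ), g x ∂μ := by
  rcases (norm_nonneg ξ).eq_or_lt with h0 | hξ0
  · simp [← h0]
  set N := ⌈1 / (4 * ‖ξ‖)⌉₊
  have hexit : ∀ y ∈ ball 0 r ∩ (K : Set E), ∀ j : ℕ, y - (j : ℝ) • ξ ∈ (K : Set E) →
      j < N ∧ y - (j : ℝ) • ξ ∈ ball 0 (1 / 2) := by
    rintro y ⟨hy, -⟩ j hj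
    rw [mem_ball_zero_iff] at hy ⊢
    have hjξ : j * ‖ξ‖ < 1 / 4 := by
      have hjr : j * (4 * r * ‖ξ‖) < r :=
        (mul_le_mul_of_nonneg_left hrξ j.cast_nonneg).trans_lt
          ((mul_infDist_neg_le_norm j.cast_nonneg hj).trans_lt hy)
      have hr0 : 0 < r := (norm_nonneg y).trans_lt hy
      nlinarith
    refine ⟨Nat.lt_ceil.2 ((lt_div_iff₀ (by positivity)).2 (by linarith)), ?_⟩
    calc ‖y - (j : ℝ) • ξ‖ ≤ ‖y‖ + j * ‖ξ‖ := by simpa [norm_smul] using norm_sub_le y ((j : ℝ) • ξ)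
      _ < 1 / 2 := by linarith
  have hN : ‖ξ‖ * N ≤ 1 := by
    calc ‖ξ‖ * N ≤ ‖ξ‖ * (1 / (4 * ‖ξ‖) + 1) := by
          gcongr
          exact (Nat.ceil_lt_add_one (by positivity)).le
      _ = 1 / 4 + ‖ξ‖ := by field_simp
      _ ≤ 1 := by linarith
  calc _ ≤ ENNReal.ofReal ‖ξ‖ * (N * ∫⁻ x in ball 0 (1 / 2) ∩ exitLayer K (-ξ), g x ∂μ) := by
        gcongr
        exact hg.setLIntegral_le_mul_exitLayer hK (measurableSet_ball.inter hK) inter_subset_right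
          measurableSet_ball hexit
    _ = ENNReal.ofReal (‖ξ‖ * N) * ∫⁻ x in ball 0 (1 / 2) ∩ exitLayer K (-ξ), g x ∂μ := by
        rw [← mul_assoc, ENNReal.ofReal_mul (norm_nonneg ξ), ENNReal.ofReal_natCast]
    _ ≤ _ := mul_le_of_le_one_left' (ENNReal.ofReal_le_one.2 hN)

end IsConstantAlong

theorem stmt_14_general {E : Type*} [NormedAddCommGroup E] [NormedSpace ℝ E]
    [FiniteDimensional ℝ E] [MeasurableSpace E] [BorelSpace E] (μ : Measure E)
    [μ.IsAddHaarMeasure] {K : ConvexCone ℝ E} (hK : IsOpen (K : Set E)) (V : Submodule ℝ E)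
    (hV : ∀ p : E, ∀ v ∈ V, (∀ t : ℝ, p + t • v ∈ K) → v = 0) {g : E → ℝ≥0∞} {M : ℝ≥0}
    (hM : ∀ x ∈ ball 0 1 ∩ (K : Set E), g x ≤ M)
    (hmass : ∀ r > 0, ∫⁻ x in ball 0 r ∩ K, g x ∂μ ≠ 0) :
    ∃ c : ℝ, 0 < c ∧ ∀ ξ ∈ V, IsConstantAlong g K ξ → ‖ξ‖ < c → infDist ξ K < c * ‖ξ‖ →
      ∫⁻ x in ball 0 1 ∩ K, g x ∂μ + ENNReal.ofReal (c * ‖ξ‖) ≤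
        ∫⁻ x in ball ξ 1 ∩ K, g x ∂μ := by
  have hne : (K : Set E).Nonempty := by
    by_contra! hempty
    simpa [hempty] using hmass 1
  obtain ⟨b, hb, hpointed⟩ := exists_mul_norm_le_infDist_add_infDist_neg hK hne V hV
  obtain ⟨C, hC, hloss⟩ := exists_setLIntegral_exitLayer_le (μ := μ) hK hne hM
  set r := min (b / 8) (1 / 4)
  obtain ⟨d, hd, hdC⟩ := ENNReal.exists_nnreal_pos_mul_lt
    (ENNReal.add_ne_top.2 ⟨hC, ENNReal.one_ne_top⟩) (hmass r (by positivity))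
  obtain ⟨c, hc, hcd, hcb, hc2⟩ : ∃ c : ℝ, 0 < c ∧ c ≤ d ∧ c ≤ b / 2 ∧ c ≤ 1 / 2 :=
    ⟨min d (min (b / 2) (1 / 2)), by positivity, by simp, by simp, by simp⟩
  refine ⟨c, hc, fun ξ hξV hξ hξc hξK => ?_⟩
  have hrξ : 4 * r * ‖ξ‖ ≤ infDist (-ξ) K := by
    have hrb : r * ‖ξ‖ ≤ b / 8 * ‖ξ‖ := mul_le_mul_of_nonneg_right (min_le_left _ _) (norm_nonneg ξ)
    have hcb : c * ‖ξ‖ ≤ b / 2 * ‖ξ‖ := by gcongr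
    linarith [hpointed ξ hξV]
  refine hξ.setLIntegral_ball_add_le hK.measurableSet (hξc.le.trans hc2) hC ENNReal.ofReal_ne_top
    (hloss ξ _ hξK) ?_
  calc (C + 1) * ENNReal.ofReal (c * ‖ξ‖)
      = ENNReal.ofReal ‖ξ‖ * (ENNReal.ofReal c * (C + 1)) := by
        rw [ENNReal.ofReal_mul hc.le]
        ring
    _ ≤ ENNReal.ofReal ‖ξ‖ * (d * (C + 1)) := by
        gcongr
        exact ENNReal.ofReal_le_of_le_toReal hcd
    _ ≤ ENNReal.ofReal ‖ξ‖ * ∫⁻ x in ball 0 r ∩ K, g x ∂μ := by gcongr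
    _ ≤ _ := hξ.mul_setLIntegral_ball_le_exitLayer_neg hK.measurableSet (hξc.le.trans hc2)
        (min_le_right _ _) hrξ

section Weight

lemma exists_nnreal_ofReal_le_on_ball {X : Type*} [PseudoMetricSpace X] [ProperSpace X]
    {w : X → ℝ} {S : Set X} (hw : ContinuousOn w (closure S)) (p : X) (r : ℝ) :
    ∃ M : ℝ≥0, ∀ x ∈ ball p r ∩ S, ENNReal.ofReal (w x) ≤ M := by
  have hcompact : IsCompact (closedBall p r ∩ closure S) :=
    (isCompact_closedBall _ _).inter_right isClosed_closure
  obtain ⟨M, hM⟩ := hcompact.bddAbove_image (hw.mono inter_subset_right)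
  refine ⟨M.toNNReal, fun x hx => ENNReal.ofReal_le_ofReal (hM ⟨x, ?_, rfl⟩)⟩
  exact ⟨ball_subset_closedBall hx.1, subset_closure hx.2⟩

lemma setLIntegral_ofReal_ne_zero {X : Type*} [TopologicalSpace X] [MeasurableSpace X]
    [OpensMeasurableSpace X] {μ : Measure X} [μ.IsOpenPosMeasure] {w : X → ℝ} {U : Set X}
    (hU : IsOpen U) (hw : ContinuousOn w U) (hpos : ∃ x ∈ U, 0 < w x) :
    ∫⁻ x in U, ENNReal.ofReal (w x) ∂μ ≠ 0 := by
  have hcont : ContinuousOn (fun x => ENNReal.ofReal (w x)) U :=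
    ENNReal.continuous_ofReal.comp_continuousOn hw
  intro hzero
  rw [lintegral_eq_zero_iff' (hcont.aemeasurable hU.measurableSet)] at hzero
  obtain ⟨x, hxU, hx⟩ := hpos
  have hx0 := Measure.eqOn_open_of_ae_eq hzero hU hcont continuousOn_const hxU
  exact (ENNReal.ofReal_pos.2 hx).ne' hx0

end Weight

section EuclideanCone

variable {n k : ℕ} {S : Set (Euc n)} {α : ℝ} {w : Euc n → ℝ}

/-- An open convex cone as a bundled `ConvexCone` with the same underlying set. -/
def IsOpenConvexCone.toConvexCone (hS : IsOpenConvexCone S) : ConvexCone ℝ (Euc n) where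
  carrier := S
  smul_mem' _ ht x hx := hS.2.2 x hx _ ht
  add_mem' x hx y hy := by
    have hmid := hS.2.1 hx hy one_half_pos.le one_half_pos.le (add_halves 1)
    simpa [smul_smul] using hS.2.2 _ hmid 2 two_pos

namespace IsAdmissibleWeight

lemma exists_pos (hw : IsAdmissibleWeight S α w) : ∃ x ∈ S, 0 < w x := by
  obtain ⟨hcont, hnonneg, ⟨y, hy, hwy⟩, -, -⟩ := hw
  by_contra! hle
  have hzero : EqOn w (fun _ => 0) S := fun x hx =>
    (hle x hx).antisymm (hnonneg x (subset_closure hx))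
  exact hwy (hzero.of_subset_closure hcont continuousOn_const subset_closure subset_rfl hy)

lemma setLIntegral_ball_ne_zero (hw : IsAdmissibleWeight S α w) (hS : IsOpenConvexCone S) {r : ℝ}
    (hr : 0 < r) : ∫⁻ x in ball 0 r ∩ S, ENNReal.ofReal (w x) ≠ 0 := by
  obtain ⟨x, hx, hwx⟩ := hw.exists_pos
  refine setLIntegral_ofReal_ne_zero (isOpen_ball.inter hS.1)
    (hw.1.mono (inter_subset_right.trans subset_closure)) ?_
  obtain ⟨t, ht, htx⟩ : ∃ t : ℝ, 0 < t ∧ t * ‖x‖ < r := by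
    obtain ⟨t, ht, htr⟩ := exists_pos_mul_lt hr ‖x‖
    exact ⟨t, ht, mul_comm ‖x‖ t ▸ htr⟩
  refine ⟨t • x, ⟨?_, hS.2.2 x hx t ht⟩, ?_⟩
  · rwa [mem_ball_zero_iff, norm_smul, Real.norm_of_nonneg ht.le]
  · rw [hw.2.2.2.1 x (subset_closure hx) t ht]
    positivity

end IsAdmissibleWeight

lemma mem_span_linSpan_orthogonal {v : Euc n} (hv : v ∈ constDirs S w k) :
    v ∈ (Submodule.span ℝ (linSpan n k))ᗮ := by
  have hortho : Submodule.span ℝ {v} ⟂ Submodule.span ℝ (linSpan n k) :=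
    Submodule.isOrtho_span.2 fun _ hx u hu => mem_singleton_iff.1 hx ▸ hv.1 u hu
  exact hortho (Submodule.mem_span_singleton_self v)

lemma isConstantAlong_of_mem_constDirs {v : Euc n} (hv : v ∈ constDirs S w k) :
    IsConstantAlong (fun x => ENNReal.ofReal (w x)) S v :=
  fun x hx t hxt => congrArg ENNReal.ofReal (hv.2 x hx t hxt)

lemma eq_zero_of_mem_orthogonal_of_mem_linSpan {v : Euc n}
    (hv : v ∈ (Submodule.span ℝ (linSpan n k))ᗮ) (hvL : v ∈ linSpan n k) : v = 0 :=
  inner_self_eq_zero.1 (hv v (Submodule.subset_span hvL))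

end EuclideanCone

/-- Linear growth of the weighted volume of the unit ball translated in a constancy
direction of the weight that almost belongs to the cone. -/
theorem stmt_14 {n k : ℕ} (hn : 1 ≤ n) (hk : k < n) (α : ℝ) (hα : 0 < α)
    (S : Set (Euc n)) (hS : IsOpenConvexCone S)
    (hSL : ∀ x ∈ S, ∀ v ∈ linSpan n k, x + v ∈ S)
    (hNoLine : ∀ p v : Euc n, (∀ t : ℝ, p + t • v ∈ S) → v ∈ linSpan n k)
    (w : Euc n → ℝ) (hw : IsAdmissibleWeight S α w) :
    ∃ c₁ : ℝ, 0 < c₁ ∧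
      ∀ ξ ∈ constDirs S w k, ξ ≠ 0 → ‖ξ‖ < c₁ → infDist (‖ξ‖⁻¹ • ξ) S < c₁ →
        wVol w (ball (0 : Euc n) 1 ∩ S) + ENNReal.ofReal (c₁ * ‖ξ‖) ≤
          wVol w (ball ξ 1 ∩ S) := by
  obtain ⟨M, hM⟩ := exists_nnreal_ofReal_le_on_ball hw.1 0 1
  obtain ⟨c, hc, hgrowth⟩ := stmt_14_general volume (K := hS.toConvexCone) hS.1
    (Submodule.span ℝ (linSpan n k))ᗮ
    (fun p v hv hline => eq_zero_of_mem_orthogonal_of_mem_linSpan hv (hNoLine p v hline)) hM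
    fun r hr => hw.setLIntegral_ball_ne_zero hS hr
  exact ⟨c, hc, fun ξ hξ hξ0 hξc hdist => hgrowth ξ (mem_span_linSpan_orthogonal hξ)
    (isConstantAlong_of_mem_constDirs hξ) hξc ((infDist_inv_norm_smul_lt_iff hξ0).1 hdist)⟩
end
end

section
/- There exist constants ε₀ > 0 and C > 0, depending only on n and α, such that the following holds. Let E ⊆ Σ be a bounded open set with smooth boundary such that w(E ∩ B_{1/2}) ≥ (1/2) w(B_{1/2} ∩ Σ). Then for every x₀ ∈ ℝⁿ with |x₀| ≤ ε₀ one has w( E Δ (B₁(x₀) ∩ Σ) ) ≤ C ∫_{∂E ∩ Σ} | |x − x₀| − 1 | w(x) dH^{n−1}(x). -/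
open MeasureTheory Metric Set
open scoped RealInnerProductSpace ENNReal NNReal Topology

noncomputable section

def HasSmoothBoundary {n : ℕ} (E : Set (Euc n)) : Prop :=
  ∃ f : Euc n → ℝ, ContDiff ℝ (⊤ : ℕ∞) f ∧ E = {x | f x < 0} ∧
    frontier E = {x | f x = 0} ∧ ∀ x ∈ frontier E, fderiv ℝ f x ≠ 0

/-!
A boundary point `z` at distance `δ` from the unit sphere around `x₀` accounts for the points within
`O(δ)` of `z` on the ray through `z`. Covering by small balls, the radial segments of length `L`
through a set `A` sweep a volume at most `C L ℋⁿ⁻¹(A)`; summing over dyadic levels of `δ`, and then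
of the weight, which is comparable along such a segment, bounds the weighted swept volume by
`C ∫ δ w dℋⁿ⁻¹`. Going outwards from a point of `E` outside the ball one leaves `E`, so
`E \ B₁(x₀)` is swept. If `y` is in the ball but not in `E`, then either `y / 4` is in `E`, and the
segment from `y / 4` to `y` meets `∂E`, or `y / 4` is a point of `B_{1/2}` missing from `E`.
Homogeneity bounds the mass of the latter `y` by a multiple of the mass missing from `B_{1/2}`.
There `δ` is bounded below and a relative isoperimetric inequality applies: every segment from a
point of `E` to a point outside crosses `∂E`, and the pairs are counted, by the same sweeping
argument, from the endpoint further away from the crossing. Concavity of `w ^ (1 / α)` enters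
through `w y ≤ 2 ^ α * w z` for `z` on the half of `[x, y]` next to `y`.
-/

section SweptMeasure

variable {X Y : Type*} [MeasurableSpace Y]

/-- The outer measure on `X` induced by a family of sets `T z ⊆ Y`: the mass of `A` is the
`μ`-mass of the region swept by the sets `T z` with `z ∈ A`. It turns covering arguments over the
boundary of a set into statements about outer measures. -/
def sweptMeasure (μ : Measure Y) (T : X → Set Y) : OuterMeasure X where
  measureOf A := μ (⋃ z ∈ A, T z)
  empty := by simp
  mono h := measure_mono (biUnion_subset_biUnion_left h)
  iUnion_nat s _ := by
    rw [biUnion_iUnion]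
    exact measure_iUnion_le _

theorem sweptMeasure_mono_family {μ : Measure Y} {T T' : X → Set Y} {A : Set X}
    (h : ∀ z ∈ A, T z ⊆ T' z) : sweptMeasure μ T A ≤ sweptMeasure μ T' A :=
  measure_mono (μ := μ) (iUnion₂_mono h)

end SweptMeasure

/-- The factor `2` is the ratio of consecutive levels in the dyadic decomposition by the size of
`φ`; the level `φ = 0` is covered by the hypothesis with `c = 0`. -/
theorem outerMeasure_le_two_mul_setLIntegral {X : Type*} [MeasurableSpace X] (τ : OuterMeasure X)
    (m : Measure X) {φ : X → ℝ≥0} (hφ : Measurable φ) {A : Set X} (hA : MeasurableSet A)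
    (h : ∀ B ⊆ A, MeasurableSet B → ∀ c : ℝ≥0, (∀ z ∈ B, φ z ≤ c) → τ B ≤ c * m B) :
    τ A ≤ 2 * ∫⁻ x in A, φ x ∂m := by
  set B : ℤ → Set X := fun k => A ∩ φ ⁻¹' Ico (2 ^ k) (2 ^ (k + 1))
  have hB k : MeasurableSet (B k) := hA.inter (hφ measurableSet_Ico)
  have zero_level : τ (A ∩ φ ⁻¹' {0}) = 0 := by
    have := h _ inter_subset_left (hA.inter (hφ (measurableSet_singleton 0))) 0 fun z hz => hz.2.le
    simpa using this
  have cover : A ⊆ A ∩ φ ⁻¹' {0} ∪ ⋃ k, B k := fun z hz => by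
    rcases eq_or_ne (φ z) 0 with h0 | h0
    · exact Or.inl ⟨hz, h0⟩
    · obtain ⟨k, hk⟩ := NNReal.exists_mem_Ico_zpow h0 one_lt_two
      exact Or.inr (mem_iUnion.2 ⟨k, hz, hk⟩)
  have disjoint : Pairwise (Function.onFun Disjoint B) := fun i j hij =>
    (((zpow_right_mono₀ (one_le_two (α := ℝ≥0))).pairwise_disjoint_on_Ico_succ hij).preimage
      φ).mono inter_subset_right inter_subset_right
  have level k : τ (B k) ≤ 2 * ∫⁻ x in B k, φ x ∂m :=
    calc τ (B k) ≤ (2 ^ (k + 1) : ℝ≥0) * m (B k) :=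
          h _ inter_subset_left (hB k) _ fun z hz => hz.2.2.le
      _ = 2 * ∫⁻ _ in B k, (2 ^ k : ℝ≥0) ∂m := by
          rw [setLIntegral_const, zpow_add_one₀ two_ne_zero, ENNReal.coe_mul, ENNReal.coe_ofNat]
          ring
      _ ≤ 2 * ∫⁻ x in B k, φ x ∂m := by
          gcongr 2 * ?_
          exact setLIntegral_mono' (hB k) fun x hx => ENNReal.coe_le_coe.2 hx.2.1
  calc τ A ≤ τ (A ∩ φ ⁻¹' {0}) + τ (⋃ k, B k) :=
        (measure_mono cover).trans (measure_union_le _ _)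
    _ ≤ ∑' k, τ (B k) := by rw [zero_level, zero_add]; exact measure_iUnion_le _
    _ ≤ ∑' k, 2 * ∫⁻ x in B k, φ x ∂m := ENNReal.tsum_le_tsum level
    _ = 2 * ∫⁻ x in ⋃ k, B k, φ x ∂m := by
        rw [ENNReal.tsum_mul_left, lintegral_iUnion hB disjoint]
    _ ≤ 2 * ∫⁻ x in A, φ x ∂m := by
        gcongr
        exact iUnion_subset fun k => inter_subset_left

theorem outerMeasure_le_const_mul_hausdorffMeasure {X : Type*} [EMetricSpace X] [MeasurableSpace X]
    [BorelSpace X] {τ : OuterMeasure X} {K : ℝ≥0∞} (hK : K ≠ 0) (hK' : K ≠ ∞) {d : ℝ} {ε : ℝ≥0∞}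
    (hε : 0 < ε) (h : ∀ B, ediam B ≤ ε → τ B ≤ K * ediam B ^ d) (A : Set X) :
    τ A ≤ K * μH[d] A := by
  have := OuterMeasure.le_mkMetric (K • fun r : ℝ≥0∞ => r ^ d) τ ε hε h A
  rwa [OuterMeasure.mkMetric_smul _ hK' hK, smul_apply,
    OuterMeasure.coe_mkMetric] at this

section Tubes

variable {V : Type*} [NormedAddCommGroup V] [NormedSpace ℝ V]

/-- The part near `z` of the segment that starts at the centre `c` and passes through `z`: the
points `c + s • (z - c)` with `s ∈ [0, σ]` at distance at most `L` from `z`. -/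
def radialSegment (c : V) (σ L : ℝ≥0) (z : V) : Set V :=
  AffineMap.lineMap c z '' Icc (0 : ℝ) σ ∩ closedBall z L

theorem radialSegment_mono (c : V) (σ : ℝ≥0) {L L' : ℝ≥0} (h : L ≤ L') (z : V) :
    radialSegment c σ L z ⊆ radialSegment c σ L' z :=
  inter_subset_inter_right _ (closedBall_subset_closedBall h)

/-- The closed neighbourhood of radius `ρ` of the segment `[z - T • u, z + T • u]`. -/
def tube (z u : V) (T ρ : ℝ) : Set V :=
  ⋃ a ∈ Icc (-T) T, closedBall (z + a • u) ρ

theorem tube_subset_iUnion_closedBall (z : V) {u : V} (hu : ‖u‖ ≤ 1) (T ρ : ℝ) {r : ℝ}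
    (hr : 0 < r) :
    tube z u T ρ ⊆
      ⋃ k ∈ Finset.Icc (-⌈T / r⌉) ⌈T / r⌉, closedBall (z + (k * r : ℝ) • u) (ρ + r) := by
  refine iUnion₂_subset fun a ha => ?_
  have floor_mem : ⌊a / r⌋ ∈ Finset.Icc (-⌈T / r⌉) ⌈T / r⌉ := by
    rw [Finset.mem_Icc, ← Int.floor_neg, ← neg_div]
    exact ⟨Int.floor_mono (by gcongr; exact ha.1),
      (Int.floor_le_ceil _).trans (Int.ceil_mono (by gcongr; exact ha.2))⟩
  have remainder : |a - ⌊a / r⌋ * r| ≤ r := by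
    have lower := (le_div_iff₀ hr).1 (Int.floor_le (a / r))
    have upper := (div_lt_iff₀ hr).1 (Int.lt_floor_add_one (a / r))
    rw [abs_le]
    constructor <;> linarith
  refine Subset.trans (closedBall_subset_closedBall' ?_)
    (subset_biUnion_of_mem (u := fun k : ℤ => closedBall (z + (k * r : ℝ) • u) (ρ + r)) floor_mem)
  rw [dist_add_left, dist_eq_norm, ← sub_smul, norm_smul, Real.norm_eq_abs]
  gcongr
  exact (mul_le_of_le_one_right (abs_nonneg _) hu).trans remainder

theorem norm_normalize_le_one (x : V) : ‖NormedSpace.normalize x‖ ≤ 1 := by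
  rcases eq_or_ne x 0 with rfl | hx
  · simp
  · exact (NormedSpace.norm_normalize hx).le

theorem radialSegment_subset_tube (c : V) {σ : ℝ≥0} (hσ : 1 ≤ σ) (L : ℝ≥0) {z z' : V} {r : ℝ}
    (hz' : z' ∈ closedBall z r) :
    radialSegment c σ L z' ⊆ tube z (NormedSpace.normalize (z - c)) (L + σ * r) (σ * r) := by
  rintro _ ⟨⟨s, ⟨hs0, hsσ⟩, rfl⟩, hL⟩
  have hz : ‖z' - z‖ ≤ r := mem_closedBall_iff_norm.1 hz'
  have shift :
      AffineMap.lineMap c z s = z + ((s - 1) * ‖z - c‖) • NormedSpace.normalize (z - c) := by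
    rw [mul_smul, NormedSpace.norm_smul_normalize, AffineMap.lineMap_apply_module']
    module
  have near : dist (AffineMap.lineMap c z' s) (AffineMap.lineMap c z s) ≤ σ * r := by
    rw [dist_eq_norm, AffineMap.lineMap_apply_module', AffineMap.lineMap_apply_module',
      show s • (z' - c) + c - (s • (z - c) + c) = s • (z' - z) by module, norm_smul,
      Real.norm_of_nonneg hs0]
    gcongr
  refine mem_iUnion₂.2 ⟨(s - 1) * ‖z - c‖, abs_le.1 ?_, shift ▸ near⟩
  calc |(s - 1) * ‖z - c‖| = ‖(AffineMap.lineMap c z' s - z') - (s - 1) • (z' - z)‖ := by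
        rw [AffineMap.lineMap_apply_module',
          show s • (z' - c) + c - z' - (s - 1) • (z' - z) = (s - 1) • (z - c) by module, norm_smul,
          abs_mul, abs_norm, Real.norm_eq_abs]
    _ ≤ ‖AffineMap.lineMap c z' s - z'‖ + |s - 1| * ‖z' - z‖ := by
        rw [← Real.norm_eq_abs, ← norm_smul]
        exact norm_sub_le _ _
    _ ≤ L + σ * r := by
        gcongr
        · exact mem_closedBall_iff_norm.1 hL
        · exact abs_le.2 ⟨by linarith [NNReal.one_le_coe.2 hσ], by linarith⟩

variable [MeasurableSpace V] (ν : Measure V)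

/-- The constant in the estimate of the volume swept by radial segments of length parameter `σ`:
the segments through a set of diameter `r` are covered by roughly `L / r` balls of radius
`(σ + 1) * r`. -/
def tubeConst (σ : ℝ≥0) : ℝ≥0∞ :=
  ENNReal.ofReal (3 * (σ + 1) ^ Module.finrank ℝ V) * ν (ball 0 1)

theorem tubeConst_ne_zero [ν.IsOpenPosMeasure] (σ : ℝ≥0) : tubeConst ν σ ≠ 0 :=
  mul_ne_zero (ENNReal.ofReal_pos.2 (by positivity)).ne' (measure_ball_pos ν 0 one_pos).ne'

variable [FiniteDimensional ℝ V]

theorem tubeConst_ne_top [IsFiniteMeasureOnCompacts ν] (σ : ℝ≥0) : tubeConst ν σ ≠ ∞ :=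
  ENNReal.mul_ne_top ENNReal.ofReal_ne_top measure_ball_lt_top.ne

variable [BorelSpace V] [ν.IsAddHaarMeasure]

theorem addHaar_tube_le (z : V) {u : V} (hu : ‖u‖ ≤ 1) {T ρ r : ℝ} (hT : 0 ≤ T) (hρ : 0 ≤ ρ)
    (hr : 0 < r) :
    ν (tube z u T ρ) ≤
      ENNReal.ofReal ((2 * (T / r) + 3) * (ρ + r) ^ Module.finrank ℝ V) * ν (ball 0 1) := by
  have hN : 0 ≤ ⌈T / r⌉ := Int.ceil_nonneg (by positivity)
  have card : (((Finset.Icc (-⌈T / r⌉) ⌈T / r⌉).card : ℕ) : ℝ) ≤ 2 * (T / r) + 3 := by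
    have cast_card : (((Finset.Icc (-⌈T / r⌉) ⌈T / r⌉).card : ℕ) : ℝ) = 2 * ⌈T / r⌉ + 1 := by
      rw [← Int.cast_natCast, Int.card_Icc, Int.toNat_of_nonneg (by lia)]
      push_cast
      ring
    rw [cast_card]
    linarith [Int.ceil_lt_add_one (T / r)]
  calc ν (tube z u T ρ)
      ≤ ∑ k ∈ Finset.Icc (-⌈T / r⌉) ⌈T / r⌉, ν (closedBall (z + (k * r : ℝ) • u) (ρ + r)) :=
        (measure_mono (tube_subset_iUnion_closedBall z hu T ρ hr)).trans
          (measure_biUnion_finset_le _ _)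
    _ = (Finset.Icc (-⌈T / r⌉) ⌈T / r⌉).card *
          (ENNReal.ofReal ((ρ + r) ^ Module.finrank ℝ V) * ν (ball 0 1)) := by
        simp only [Measure.addHaar_closedBall ν _ (add_nonneg hρ hr.le), Finset.sum_const,
          nsmul_eq_mul]
    _ ≤ _ := by
        rw [← mul_assoc, ← ENNReal.ofReal_natCast, ← ENNReal.ofReal_mul (by positivity)]
        gcongr

variable {m : ℕ} (hm : Module.finrank ℝ V = m + 1) (c : V) {σ : ℝ≥0} (hσ : 1 ≤ σ) {L : ℝ≥0}
include hm hσ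

theorem sweptMeasure_radialSegment_le_of_subset_closedBall {r : ℝ≥0} (hr : 0 < r)
    (hrL : (2 * σ + 3) * r ≤ L) {z : V} {A : Set V} (hA : A ⊆ closedBall z r) :
    sweptMeasure ν (radialSegment c σ L) A ≤ tubeConst ν σ * L * (r : ℝ≥0∞) ^ m := by
  have hr' : (0 : ℝ) < r := hr
  have volume_le : (2 * ((L + σ * r) / r) + 3) * (σ * r + r) ^ Module.finrank ℝ V ≤
      3 * (σ + 1) ^ Module.finrank ℝ V * (L * r ^ m : ℝ) :=
    calc (2 * ((L + σ * r) / r) + 3) * (σ * r + r) ^ Module.finrank ℝ V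
        = (2 * L + (2 * σ + 3) * r) * ((σ + 1) ^ Module.finrank ℝ V * r ^ m : ℝ) := by
          rw [hm, show (σ * r + r : ℝ) = (σ + 1) * r by ring, mul_pow]
          field_simp
          ring
      _ ≤ (2 * L + L) * ((σ + 1) ^ Module.finrank ℝ V * r ^ m : ℝ) := by
          gcongr
          exact_mod_cast hrL
      _ = _ := by ring
  calc sweptMeasure ν (radialSegment c σ L) A
      ≤ ν (tube z (NormedSpace.normalize (z - c)) (L + σ * r) (σ * r)) :=
        measure_mono (iUnion₂_subset fun z' hz' => radialSegment_subset_tube c hσ L (hA hz'))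
    _ ≤ _ := addHaar_tube_le ν z (norm_normalize_le_one _) (by positivity)
        (by positivity) hr'
    _ ≤ ENNReal.ofReal (3 * (σ + 1) ^ Module.finrank ℝ V * (L * r ^ m : ℝ)) * ν (ball 0 1) := by
        gcongr
    _ = tubeConst ν σ * L * (r : ℝ≥0∞) ^ m := by
        rw [tubeConst, ENNReal.ofReal_mul (by positivity), ENNReal.ofReal_mul L.coe_nonneg,
          ENNReal.ofReal_pow r.coe_nonneg, ENNReal.ofReal_coe_nnreal, ENNReal.ofReal_coe_nnreal]
        ring

theorem sweptMeasure_radialSegment_le_of_ediam_le (hL : 0 < L) {A : Set V}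
    (hA : ediam A ≤ (L / (2 * (2 * σ + 3)) : ℝ≥0)) :
    sweptMeasure ν (radialSegment c σ L) A ≤ tubeConst ν σ * L * ediam A ^ m := by
  rcases A.eq_empty_or_nonempty with rfl | ⟨z, hz⟩
  · simp
  lift ediam A to ℝ≥0 using ne_top_of_le_ne_top ENNReal.coe_ne_top hA with d hd
  have bound : ∀ᶠ r : ℝ≥0 in 𝓝[>] d,
      sweptMeasure ν (radialSegment c σ L) A ≤ tubeConst ν σ * L * (r : ℝ≥0∞) ^ m := by
    have hd_lt : d < L / (2 * σ + 3) := (ENNReal.coe_le_coe.1 hA).trans_lt <| by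
      gcongr
      exact lt_mul_of_one_lt_left (by positivity) one_lt_two
    filter_upwards [Ioo_mem_nhdsGT hd_lt] with r ⟨hdr, hrL⟩
    refine sweptMeasure_radialSegment_le_of_subset_closedBall ν hm c hσ (pos_of_gt hdr)
      ((le_div_iff₀' (by positivity)).1 hrL.le) (z := z) fun x hx => ?_
    rw [mem_closedBall, ← coe_nndist, NNReal.coe_le_coe, ← ENNReal.coe_le_coe, ← edist_nndist]
    exact (hd ▸ edist_le_ediam_of_mem hx hz).trans (ENNReal.coe_le_coe.2 hdr.le)
  have limit : Continuous fun r : ℝ≥0 => tubeConst ν σ * L * (r : ℝ≥0∞) ^ m :=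
    (ENNReal.continuous_const_mul
      (ENNReal.mul_ne_top (tubeConst_ne_top ν σ) ENNReal.coe_ne_top)).comp
      ((ENNReal.continuous_pow m).comp ENNReal.continuous_coe)
  exact ge_of_tendsto (limit.tendsto d |>.mono_left nhdsWithin_le_nhds) bound

theorem sweptMeasure_radialSegment_le (hL : 0 < L) (A : Set V) :
    sweptMeasure ν (radialSegment c σ L) A ≤ tubeConst ν σ * L * μH[m] A := by
  have hL' : (L : ℝ≥0∞) ≠ 0 := ENNReal.coe_ne_zero.2 hL.ne'
  refine outerMeasure_le_const_mul_hausdorffMeasure (mul_ne_zero (tubeConst_ne_zero ν σ) hL')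
    (ENNReal.mul_ne_top (tubeConst_ne_top ν σ) ENNReal.coe_ne_top)
    (ε := (L / (2 * (2 * σ + 3)) : ℝ≥0)) (ENNReal.coe_pos.2 (by positivity)) (fun B hB => ?_) A
  rw [ENNReal.rpow_natCast]
  exact sweptMeasure_radialSegment_le_of_ediam_le ν hm c hσ hL hB

variable {v g : V → ℝ≥0} {A : Set V} {T : V → Set V} {κ κ' : ℝ≥0} (hκ : 0 < κ) (hg : Measurable g)
  (hA : MeasurableSet A) (hT : ∀ z ∈ A, T z ⊆ radialSegment c σ (κ * g z) z)
  (hA0 : ν (A ∩ g ⁻¹' {0}) = 0)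
include hκ hg hA hT hA0

theorem sweptMeasure_le_of_subset_radialSegment :
    sweptMeasure ν T A ≤ 2 * tubeConst ν σ * κ * ∫⁻ z in A, g z ∂μH[m] := by
  have layer : ∀ B ⊆ A, MeasurableSet B → ∀ a : ℝ≥0, (∀ z ∈ B, g z ≤ a) →
      sweptMeasure ν T B ≤ a * ((tubeConst ν σ * κ) • (μH[m] : Measure V)) B := by
    intro B hBA _ a ha
    rcases eq_zero_or_pos a with rfl | ha_pos
    · have degenerate : ⋃ z ∈ B, T z ⊆ A ∩ g ⁻¹' {0} := iUnion₂_subset fun z hz y hy => by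
        have hgz : g z = 0 := le_zero_iff.1 (ha z hz)
        have hyz : y = z := by simpa [hgz] using (hT z (hBA hz) hy).2
        exact hyz ▸ ⟨hBA hz, hgz⟩
      exact ((measure_mono degenerate).trans_eq hA0).trans zero_le
    · calc sweptMeasure ν T B ≤ sweptMeasure ν (radialSegment c σ (κ * a)) B :=
            sweptMeasure_mono_family fun z hz =>
              (hT z (hBA hz)).trans (radialSegment_mono c σ (mul_le_mul_right (ha z hz) κ) z)
        _ ≤ tubeConst ν σ * (κ * a : ℝ≥0) * μH[m] B :=
            sweptMeasure_radialSegment_le ν hm c hσ (mul_pos hκ ha_pos) B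
        _ = a * ((tubeConst ν σ * κ) • (μH[m] : Measure V)) B := by
            rw [Measure.smul_apply, smul_eq_mul, ENNReal.coe_mul]
            ring
  refine (outerMeasure_le_two_mul_setLIntegral _ _ hg hA layer).trans_eq ?_
  rw [Measure.restrict_smul, lintegral_smul_measure, smul_eq_mul]
  ring

theorem sweptMeasure_withDensity_le (hv : Measurable v)
    (hvT : ∀ z ∈ A, ∀ y ∈ T z, v y ≤ κ' * v z) :
    sweptMeasure (ν.withDensity fun y => v y) T A ≤
      4 * tubeConst ν σ * κ * κ' * ∫⁻ z in A, g z * v z ∂μH[m] := by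
  set K : ℝ≥0∞ := 2 * tubeConst ν σ * κ * κ'
  have layer : ∀ B ⊆ A, MeasurableSet B → ∀ b : ℝ≥0, (∀ z ∈ B, v z ≤ b) →
      sweptMeasure (ν.withDensity fun y => v y) T B ≤
        b * (K • (μH[m] : Measure V).withDensity fun z => g z) B := by
    intro B hBA hB b hb
    have density_le : ∀ y ∈ ⋃ z ∈ B, T z, (v y : ℝ≥0∞) ≤ (κ' * b : ℝ≥0) := by
      simp only [mem_iUnion]
      rintro y ⟨z, hz, hy⟩
      exact ENNReal.coe_le_coe.2 ((hvT z (hBA hz) y hy).trans (mul_le_mul_right (hb z hz) κ'))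
    calc sweptMeasure (ν.withDensity fun y => v y) T B
        = ∫⁻ y in ⋃ z ∈ B, T z, v y ∂ν := withDensity_apply' _ _
      _ ≤ ∫⁻ _ in ⋃ z ∈ B, T z, (κ' * b : ℝ≥0) ∂ν := setLIntegral_mono measurable_const density_le
      _ = (κ' * b : ℝ≥0) * sweptMeasure ν T B := setLIntegral_const _ _
      _ ≤ (κ' * b : ℝ≥0) * (2 * tubeConst ν σ * κ * ∫⁻ z in B, g z ∂μH[m]) := by
          gcongr
          exact sweptMeasure_le_of_subset_radialSegment ν hm c hσ hκ hg hB
            (fun z hz => hT z (hBA hz)) (measure_mono_null (inter_subset_inter_left _ hBA) hA0)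
      _ = b * (K • (μH[m] : Measure V).withDensity fun z => g z) B := by
          rw [Measure.smul_apply, smul_eq_mul, withDensity_apply _ hB, ENNReal.coe_mul]
          ring
  refine (outerMeasure_le_two_mul_setLIntegral _ _ hv hA layer).trans_eq ?_
  rw [Measure.restrict_smul, lintegral_smul_measure, smul_eq_mul,
    setLIntegral_withDensity_eq_setLIntegral_mul _ hg.coe_nnreal_ennreal hv.coe_nnreal_ennreal hA]
  simp only [K, Pi.mul_apply]
  ring

end Tubes

section Crossing

theorem exists_mem_Icc_mem_frontier {X : Type*} [TopologicalSpace X] {E : Set X} {γ : ℝ → X}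
    (hγ : Continuous γ) {a b : ℝ} (hab : a ≤ b) (ha : γ a ∈ E) (hb : γ b ∉ E) :
    ∃ t ∈ Icc a b, γ t ∈ frontier E := by
  rw [frontier_eq_closure_inter_closure]
  exact isPreconnected_closed_iff.1 isPreconnected_Icc _ _ (isClosed_closure.preimage hγ)
    (isClosed_closure.preimage hγ)
    (fun t _ => (em (γ t ∈ E)).imp (subset_closure ·) (subset_closure ·))
    ⟨a, left_mem_Icc.2 hab, subset_closure ha⟩ ⟨b, right_mem_Icc.2 hab, subset_closure hb⟩

variable {V : Type*} [NormedAddCommGroup V] [NormedSpace ℝ V]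

/-- The pairs `(x, y)` for which the segment from `x` to `y` meets `F` at a time in `[a, b]`. -/
def crossingPairs (F : Set V) (a b : ℝ) : Set (V × V) :=
  {p | ∃ t ∈ Icc a b, AffineMap.lineMap p.1 p.2 t ∈ F}

theorem isClosed_crossingPairs {F : Set V} (hF : IsClosed F) (a b : ℝ) :
    IsClosed (crossingPairs F a b) := by
  have image_snd : crossingPairs F a b =
      Prod.snd '' {q : Icc a b × V × V | AffineMap.lineMap q.2.1 q.2.2 (q.1 : ℝ) ∈ F} := by
    ext p
    simp [crossingPairs]
  rw [image_snd]
  refine isClosedMap_snd_of_compactSpace _ (hF.preimage ?_)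
  simp only [AffineMap.lineMap_apply_module']
  fun_prop

theorem preimage_swap_crossingPairs (F : Set V) (a b : ℝ) :
    Prod.swap ⁻¹' crossingPairs F a b = crossingPairs F (1 - b) (1 - a) := by
  ext ⟨x, y⟩
  constructor
  · rintro ⟨t, ⟨hat, htb⟩, ht⟩
    refine ⟨1 - t, ⟨by linarith, by linarith⟩, ?_⟩
    rwa [AffineMap.lineMap_apply_one_sub]
  · rintro ⟨t, ⟨hat, htb⟩, ht⟩
    refine ⟨1 - t, ⟨by linarith, by linarith⟩, ?_⟩
    rwa [Prod.fst_swap, Prod.snd_swap, AffineMap.lineMap_apply_one_sub]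

theorem mem_crossingPairs_frontier {E : Set V} {x y : V} (hx : x ∈ E) (hy : y ∉ E) (a : ℝ) :
    (x, y) ∈ crossingPairs (frontier E) 0 a ∪ crossingPairs (frontier E) a 1 := by
  obtain ⟨t, ⟨ht0, ht1⟩, ht⟩ :=
    exists_mem_Icc_mem_frontier (AffineMap.lineMap_continuous (p := x) (q := y)) zero_le_one
      (by simpa using hx) (by simpa using hy)
  exact (le_total t a).imp (fun h => ⟨t, ⟨ht0, h⟩, ht⟩) fun h => ⟨t, ⟨h, ht1⟩, ht⟩

end Crossing

theorem prod_inter_prod_le_mul {X Y : Type*} [MeasurableSpace X] [MeasurableSpace Y] (μ : Measure X)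
    (μ' : Measure Y) [SFinite μ'] {G : Set (X × Y)} (hG : MeasurableSet G) {s : Set X}
    (hs : MeasurableSet s) {t : Set Y} (ht : MeasurableSet t) {P : ℝ≥0∞}
    (hP : ∀ x ∈ s, μ' (t ∩ Prod.mk x ⁻¹' G) ≤ P) :
    μ.prod μ' (G ∩ s ×ˢ t) ≤ μ s * P := by
  calc μ.prod μ' (G ∩ s ×ˢ t) = ∫⁻ x, μ' (Prod.mk x ⁻¹' (G ∩ s ×ˢ t)) ∂μ :=
        Measure.prod_apply (hG.inter (hs.prod ht))
    _ ≤ ∫⁻ x, s.indicator (fun _ => P) x ∂μ := by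
        refine lintegral_mono fun x => ?_
        by_cases hx : x ∈ s
        · rw [indicator_of_mem hx]
          have slice : Prod.mk x ⁻¹' (G ∩ s ×ˢ t) ⊆ t ∩ Prod.mk x ⁻¹' G :=
            fun y hy => ⟨hy.2.2, hy.1⟩
          exact (measure_mono slice).trans (hP x hx)
        · simp [preimage_inter, hx]
    _ = μ s * P := by rw [lintegral_indicator_const hs, mul_comm]

section RelativeIsoperimetric

variable {V : Type*} [NormedAddCommGroup V] [NormedSpace ℝ V] [MeasurableSpace V] [BorelSpace V]
  [FiniteDimensional ℝ V] (ν : Measure V) [ν.IsAddHaarMeasure] {m : ℕ}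
  (hm : Module.finrank ℝ V = m + 1) {Ω : Set V} (hΩ : Convex ℝ Ω) (hΩm : MeasurableSet Ω) {D : ℝ≥0}
  (hD : 0 < D) (hΩD : ∀ x ∈ Ω, ∀ y ∈ Ω, dist x y ≤ D) {v : V → ℝ≥0} (hv : Measurable v) {κ : ℝ≥0}
  (hvκ : ∀ x ∈ Ω, ∀ y ∈ Ω, ∀ t ∈ Icc (1 / 2 : ℝ) 1, v y ≤ κ * v (AffineMap.lineMap x y t))
include hm hΩ hΩm hD hΩD hv hvκ

theorem withDensity_crossingPairs_slice_le {F : Set V} (hF : MeasurableSet F) {c : V} (hc : c ∈ Ω) :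
    ν.withDensity (fun y => v y) (Ω ∩ Prod.mk c ⁻¹' crossingPairs F (1 / 2) 1) ≤
      4 * tubeConst ν 2 * D * κ * ∫⁻ z in F ∩ Ω, v z ∂μH[m] := by
  set T : V → Set V := fun z => {y ∈ Ω | ∃ t ∈ Icc (1 / 2 : ℝ) 1, AffineMap.lineMap c y t = z}
  have slice_subset : Ω ∩ Prod.mk c ⁻¹' crossingPairs F (1 / 2) 1 ⊆ ⋃ z ∈ F ∩ Ω, T z := by
    rintro y ⟨hy, t, ht, hF⟩
    exact mem_biUnion ⟨hF, hΩ.lineMap_mem hc hy ⟨by linarith [ht.1], ht.2⟩⟩ ⟨hy, t, ht, rfl⟩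
  have hT : ∀ z ∈ F ∩ Ω, T z ⊆ radialSegment c 2 (D * 1) z := by
    rintro _ hz y ⟨hy, t, ht, rfl⟩
    have ht0 : 0 < t := by linarith [ht.1]
    refine ⟨⟨t⁻¹, ⟨by positivity, ?_⟩, ?_⟩, ?_⟩
    · simpa using inv_anti₀ one_half_pos ht.1
    · simp [ht0.ne']
    · simpa using hΩD y hy _ hz.2
  have hvT : ∀ z ∈ F ∩ Ω, ∀ y ∈ T z, v y ≤ κ * v z := by
    rintro _ - y ⟨hy, t, ht, rfl⟩
    exact hvκ c hc y hy t ht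
  have swept_le := sweptMeasure_withDensity_le ν hm c one_le_two hD (g := fun _ => 1)
    measurable_const (hF.inter hΩm) hT (by simp) hv hvT
  simp only [ENNReal.coe_one, one_mul] at swept_le
  exact (measure_mono slice_subset).trans swept_le

theorem withDensity_inter_mul_diff_le {E : Set V} (hE : MeasurableSet E) :
    ν.withDensity (fun y => v y) (Ω ∩ E) * ν.withDensity (fun y => v y) (Ω \ E) ≤
      ν.withDensity (fun y => v y) Ω *
        (4 * tubeConst ν 2 * D * κ * ∫⁻ z in frontier E ∩ Ω, v z ∂μH[m]) := by
  set μ := ν.withDensity fun y => v y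
  set P := 4 * tubeConst ν 2 * D * κ * ∫⁻ z in frontier E ∩ Ω, v z ∂μH[m]
  have slice_le : ∀ c ∈ Ω, μ (Ω ∩ Prod.mk c ⁻¹' crossingPairs (frontier E) (1 / 2) 1) ≤ P :=
    fun c hc => withDensity_crossingPairs_slice_le ν hm hΩ hΩm hD hΩD hv hvκ
      isClosed_frontier.measurableSet hc
  have measurable_crossing a b : MeasurableSet (crossingPairs (frontier E) a b) :=
    (isClosed_crossingPairs isClosed_frontier a b).measurableSet
  have late : μ.prod μ (crossingPairs (frontier E) (1 / 2) 1 ∩ (Ω ∩ E) ×ˢ (Ω \ E)) ≤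
      μ (Ω ∩ E) * P :=
    prod_inter_prod_le_mul μ μ (measurable_crossing _ _) (hΩm.inter hE) (hΩm.diff hE) fun c hc =>
      (measure_mono (inter_subset_inter_left _ sdiff_subset)).trans (slice_le c hc.1)
  have early : μ.prod μ (crossingPairs (frontier E) 0 (1 / 2) ∩ (Ω ∩ E) ×ˢ (Ω \ E)) ≤
      μ (Ω \ E) * P := by
    rw [← Measure.prod_swap, Measure.map_apply measurable_swap ((measurable_crossing _ _).inter
      ((hΩm.inter hE).prod (hΩm.diff hE))), preimage_inter, preimage_swap_crossingPairs,
      preimage_swap_prod]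
    norm_num only
    exact prod_inter_prod_le_mul μ μ (measurable_crossing _ _) (hΩm.diff hE) (hΩm.inter hE)
      fun c hc => (measure_mono (inter_subset_inter_left _ inter_subset_left)).trans
        (slice_le c hc.1)
  calc μ (Ω ∩ E) * μ (Ω \ E) = μ.prod μ ((Ω ∩ E) ×ˢ (Ω \ E)) := (Measure.prod_prod _ _).symm
    _ ≤ μ.prod μ (crossingPairs (frontier E) 0 (1 / 2) ∩ (Ω ∩ E) ×ˢ (Ω \ E)) +
          μ.prod μ (crossingPairs (frontier E) (1 / 2) 1 ∩ (Ω ∩ E) ×ˢ (Ω \ E)) := by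
        refine (measure_mono ?_).trans (measure_union_le _ _)
        rw [← union_inter_distrib_right]
        exact fun p hp => ⟨mem_crossingPairs_frontier hp.1.2 hp.2.2 _, hp⟩
    _ ≤ μ (Ω \ E) * P + μ (Ω ∩ E) * P := add_le_add early late
    _ = μ Ω * P := by rw [← add_mul, measure_sdiff_add_inter Ω hE]

theorem withDensity_diff_le_of_le_two_mul (hΩ_fin : ν.withDensity (fun y => v y) Ω ≠ ∞) {E : Set V}
    (hE : MeasurableSet E)
    (half : ν.withDensity (fun y => v y) Ω ≤ 2 * ν.withDensity (fun y => v y) (Ω ∩ E)) :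
    ν.withDensity (fun y => v y) (Ω \ E) ≤
      2 * (4 * tubeConst ν 2 * D * κ * ∫⁻ z in frontier E ∩ Ω, v z ∂μH[m]) := by
  rcases eq_or_ne (ν.withDensity (fun y => v y) (Ω ∩ E)) 0 with h0 | h0
  · have : ν.withDensity (fun y => v y) Ω = 0 := by simpa [h0] using half
    exact (measure_mono_null sdiff_subset this).trans_le zero_le
  · refine (ENNReal.mul_le_mul_iff_right h0
      (measure_ne_top_of_subset inter_subset_left hΩ_fin)).1 ?_
    refine (withDensity_inter_mul_diff_le ν hm hΩ hΩm hD hΩD hv hvκ hE).trans ?_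
    exact (mul_le_mul_left half _).trans_eq (by ring)

end RelativeIsoperimetric

section SphereDeviation

variable {V : Type*} [NormedAddCommGroup V]

/-- The distance from `x` to the unit sphere centred at `x₀`. -/
def sphereDeviation (x₀ x : V) : ℝ≥0 :=
  ‖‖x - x₀‖ - 1‖₊

theorem coe_sphereDeviation (x₀ x : V) : (sphereDeviation x₀ x : ℝ) = |‖x - x₀‖ - 1| :=
  rfl

theorem continuous_sphereDeviation (x₀ : V) : Continuous (sphereDeviation x₀) := by
  unfold sphereDeviation
  fun_prop

theorem preimage_sphereDeviation_zero (x₀ : V) : sphereDeviation x₀ ⁻¹' {0} = sphere x₀ 1 := by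
  ext x
  simp [sphereDeviation, sub_eq_zero]

variable [NormedSpace ℝ V]

theorem norm_smul_sub_le (x₀ z : V) {s : ℝ} (hs : s ∈ Icc (0 : ℝ) 1) :
    ‖s • z - x₀‖ ≤ s * ‖z - x₀‖ + (1 - s) * ‖x₀‖ :=
  calc ‖s • z - x₀‖ = ‖s • (z - x₀) - (1 - s) • x₀‖ := by
        congr 1
        module
    _ ≤ ‖s • (z - x₀)‖ + ‖(1 - s) • x₀‖ := norm_sub_le _ _
    _ = s * ‖z - x₀‖ + (1 - s) * ‖x₀‖ := by
        rw [norm_smul, norm_smul, Real.norm_of_nonneg hs.1, Real.norm_of_nonneg (sub_nonneg.2 hs.2)]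

theorem dist_smul_self {s : ℝ} (hs : s ≤ 1) (z : V) : dist (s • z) z = (1 - s) * ‖z‖ := by
  rw [dist_comm, dist_eq_norm, show z - s • z = (1 - s) • z by module, norm_smul,
    Real.norm_of_nonneg (sub_nonneg.2 hs)]

variable {x₀ : V} (hx₀ : ‖x₀‖ ≤ 1 / 8) {s : ℝ} (hs : s ∈ Icc (0 : ℝ) 1)
include hx₀ hs

theorem dist_smul_self_le_of_one_le {z : V} (h : 1 ≤ ‖s • z - x₀‖) :
    dist (s • z) z ≤ 3 * sphereDeviation x₀ z := by
  have hs' : 0 ≤ 1 - s := sub_nonneg.2 hs.2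
  have excess : ‖z - x₀‖ ≤ 1 + sphereDeviation x₀ z := by
    linarith [le_abs_self (‖z - x₀‖ - 1), coe_sphereDeviation x₀ z]
  have defect : (1 - s) * (7 / 8) ≤ s * sphereDeviation x₀ z := by
    linarith [norm_smul_sub_le x₀ z hs, mul_le_mul_of_nonneg_left hx₀ hs',
      mul_le_mul_of_nonneg_left excess hs.1]
  have norm_le : ‖z‖ ≤ 9 / 8 + sphereDeviation x₀ z := by
    linarith [norm_le_norm_sub_add z x₀]
  rw [dist_smul_self hs.2]
  nlinarith [mul_le_mul_of_nonneg_left norm_le hs', hs.1, NNReal.coe_nonneg (sphereDeviation x₀ z)]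

theorem dist_smul_self_le_of_le_one {y : V} (h : ‖y - x₀‖ ≤ 1) :
    dist (s • y) y ≤ 2 * sphereDeviation x₀ (s • y) := by
  have hs' : 0 ≤ 1 - s := sub_nonneg.2 hs.2
  have defect : 1 - ‖s • y - x₀‖ ≤ sphereDeviation x₀ (s • y) := by
    linarith [neg_le_abs (‖s • y - x₀‖ - 1), coe_sphereDeviation x₀ (s • y)]
  have norm_le : ‖y‖ ≤ 9 / 8 := by linarith [norm_le_norm_sub_add y x₀]
  rw [dist_smul_self hs.2]
  linarith [norm_smul_sub_le x₀ y hs, mul_le_mul_of_nonneg_left hx₀ hs',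
    mul_le_mul_of_nonneg_left h hs.1, mul_le_mul_of_nonneg_left norm_le hs']

end SphereDeviation

section Cone

theorem exists_one_le_smul_notMem {V : Type*} [NormedAddCommGroup V] [NormedSpace ℝ V] {E : Set V}
    (hE : Bornology.IsBounded E) {y : V} (hy : y ≠ 0) : ∃ R : ℝ, 1 ≤ R ∧ R • y ∉ E := by
  obtain ⟨R, hR⟩ := hE.exists_norm_le
  have hy' : 0 < ‖y‖ := norm_pos_iff.2 hy
  refine ⟨max 1 ((R + 1) / ‖y‖), le_max_left _ _, fun h => ?_⟩
  have far : R + 1 ≤ max 1 ((R + 1) / ‖y‖) * ‖y‖ := (div_le_iff₀ hy').1 (le_max_right _ _)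
  have near := hR _ h
  rw [norm_smul, Real.norm_of_nonneg (by positivity)] at near
  linarith

variable {V : Type*} [NormedAddCommGroup V] [NormedSpace ℝ V] [MeasurableSpace V]
  (ν : Measure V)

/-- The constant of the ball estimate for a density that is homogeneous of degree `α` and doubling
along segments with factor `κ`. Its terms account for the part of the set outside the ball, the
missing part of the ball below which the half ball is missing too, and the rest of the missing
part. -/
def ballConst (α : ℝ) (κ : ℝ≥0) : ℝ≥0∞ :=
  4 * tubeConst ν 1 * 3 +
    ((4 ^ α * 4 ^ Module.finrank ℝ V : ℝ≥0) * (32 * tubeConst ν 2 * κ) +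
      4 * tubeConst ν 4 * 2 * (4 ^ α : ℝ≥0))

theorem ballConst_ne_zero [ν.IsOpenPosMeasure] (α : ℝ) (κ : ℝ≥0) : ballConst ν α κ ≠ 0 := by
  simp [ballConst, tubeConst_ne_zero]

theorem ballConst_ne_top [FiniteDimensional ℝ V] [IsFiniteMeasureOnCompacts ν] (α : ℝ)
    (κ : ℝ≥0) : ballConst ν α κ ≠ ∞ := by
  simp [ballConst, ENNReal.mul_eq_top, tubeConst_ne_top]

variable [BorelSpace V] [FiniteDimensional ℝ V] [ν.IsAddHaarMeasure]

theorem addHaar_inter_preimage_sphereDeviation_zero (x₀ : V) (A : Set V) :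
    ν (A ∩ sphereDeviation x₀ ⁻¹' {0}) = 0 := by
  rw [preimage_sphereDeviation_zero]
  exact measure_mono_null inter_subset_right (Measure.addHaar_sphere_of_ne_zero ν x₀ one_ne_zero)

variable {α : ℝ} {v : V → ℝ≥0}
  (hv : Measurable v)
  (hvα : ∀ t : ℝ≥0, 0 < t → ∀ x, v ((t : ℝ) • x) = t ^ α * v x)

include hv hvα in
theorem withDensity_preimage_smul {r : ℝ≥0} (hr : 0 < r) {Y : Set V} (hY : MeasurableSet Y) :
    ν.withDensity (fun y => v y) ((fun y => (r : ℝ) • y) ⁻¹' Y) =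
      (r⁻¹ ^ α * r⁻¹ ^ Module.finrank ℝ V : ℝ≥0) * ν.withDensity (fun y => v y) Y := by
  have hm : Measurable fun y : V => (r : ℝ) • y := measurable_const_smul _
  have hvm : Measurable fun y : V => v ((r : ℝ) • y) := hv.comp hm
  have rescale (y : V) : v y = r⁻¹ ^ α * v ((r : ℝ) • y) := by
    rw [hvα r hr, NNReal.inv_rpow, inv_mul_cancel_left₀ (NNReal.rpow_pos hr).ne']
  calc ν.withDensity (fun y => v y) ((fun y => (r : ℝ) • y) ⁻¹' Y)
      = ∫⁻ y in (fun y => (r : ℝ) • y) ⁻¹' Y, (r⁻¹ ^ α : ℝ≥0) * v ((r : ℝ) • y) ∂ν := by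
        rw [withDensity_apply _ (hm hY)]
        simp only [← ENNReal.coe_mul, ← rescale]
    _ = (r⁻¹ ^ α : ℝ≥0) * ∫⁻ y in Y, v y ∂(ν.map fun y => (r : ℝ) • y) := by
        rw [lintegral_const_mul _ hvm.coe_nnreal_ennreal,
          setLIntegral_map hY hv.coe_nnreal_ennreal hm]
    _ = _ := by
        rw [Measure.map_addHaar_smul ν (NNReal.coe_ne_zero.2 hr.ne'), Measure.restrict_smul,
          lintegral_smul_measure, withDensity_apply _ hY, smul_eq_mul, ← mul_assoc,
          ENNReal.coe_mul, abs_of_nonneg (by positivity), ← NNReal.coe_pow, ← NNReal.coe_inv,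
          ENNReal.ofReal_coe_nnreal, inv_pow]

variable {m : ℕ} (hm : Module.finrank ℝ V = m + 1) (hα : 0 ≤ α)
include hv hvα hm hα

theorem withDensity_le_of_forall_exists_smul {σ κ : ℝ≥0} (hσ : 1 ≤ σ) (hκ : 0 < κ) {g : V → ℝ≥0}
    (hg : Measurable g) {A : Set V} (hA : MeasurableSet A) (hA0 : ν (A ∩ g ⁻¹' {0}) = 0)
    {G : Set V} (hG : ∀ y ∈ G, ∃ z ∈ A, ∃ t : ℝ≥0,
      0 < t ∧ t ≤ σ ∧ (t : ℝ) • z = y ∧ dist y z ≤ κ * g z) :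
    ν.withDensity (fun y => v y) G ≤
      4 * tubeConst ν σ * κ * (σ ^ α : ℝ≥0) * ∫⁻ z in A, g z * v z ∂μH[m] := by
  set T : V → Set V := fun z =>
    {y | ∃ t : ℝ≥0, 0 < t ∧ t ≤ σ ∧ (t : ℝ) • z = y ∧ dist y z ≤ κ * g z}
  have hGT : G ⊆ ⋃ z ∈ A, T z := fun y hy => mem_iUnion₂.2 <| by simpa [T] using hG y hy
  have hT : ∀ z ∈ A, T z ⊆ radialSegment 0 σ (κ * g z) z := by
    rintro z - _ ⟨t, -, htσ, rfl, hdist⟩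
    exact ⟨⟨t, ⟨t.coe_nonneg, htσ⟩, by simp [AffineMap.lineMap_apply_module']⟩, hdist⟩
  have hvT : ∀ z ∈ A, ∀ y ∈ T z, v y ≤ σ ^ α * v z := by
    rintro z - _ ⟨t, ht, htσ, rfl, -⟩
    rw [hvα t ht]
    gcongr
  exact (measure_mono hGT).trans (sweptMeasure_withDensity_le ν hm 0 hσ hκ hg hA hT hA0 hv hvT)

variable {S : Set V} (hS : MeasurableSet S) (hScone : ∀ x ∈ S, ∀ t : ℝ, 0 < t → t • x ∈ S)
  {E : Set V} {x₀ : V} (hx₀ : ‖x₀‖ ≤ 1 / 8)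
include hS hScone hx₀

theorem withDensity_diff_ball_le (hES : E ⊆ S) (hE : Bornology.IsBounded E) :
    ν.withDensity (fun y => v y) (E \ ball x₀ 1) ≤
      4 * tubeConst ν 1 * 3 * ∫⁻ z in frontier E ∩ S, sphereDeviation x₀ z * v z ∂μH[m] := by
  have hit : ∀ y ∈ E \ ball x₀ 1, ∃ z ∈ frontier E ∩ S, ∃ t : ℝ≥0,
      0 < t ∧ t ≤ 1 ∧ (t : ℝ) • z = y ∧ dist y z ≤ (3 : ℝ≥0) * sphereDeviation x₀ z := by
    rintro y ⟨hyE, hy⟩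
    rw [mem_ball_iff_norm, not_lt] at hy
    have hy0 : y ≠ 0 := fun h => by
      rw [h, zero_sub, norm_neg] at hy
      linarith
    obtain ⟨R, hR1, hR⟩ : ∃ R : ℝ, 1 ≤ R ∧ R • y ∉ E := exists_one_le_smul_notMem hE hy0
    obtain ⟨r, ⟨hr1, -⟩, hr⟩ := exists_mem_Icc_mem_frontier (γ := fun r : ℝ => r • y) (by fun_prop)
      hR1 (by simpa using hyE) hR
    have hr0 : 0 < r := by linarith
    lift r to ℝ≥0 using hr0.le
    have cancel : ((r⁻¹ : ℝ≥0) : ℝ) • (r : ℝ) • y = y := by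
      rw [NNReal.coe_inv, inv_smul_smul₀ hr0.ne']
    refine ⟨(r : ℝ) • y, ⟨hr, hScone y (hES hyE) r hr0⟩, r⁻¹, inv_pos.2 hr0,
      inv_le_one_of_one_le₀ hr1, cancel, ?_⟩
    have := dist_smul_self_le_of_one_le hx₀ (s := (r⁻¹ : ℝ≥0)) (z := (r : ℝ) • y)
      ⟨by positivity, inv_le_one_of_one_le₀ hr1⟩ (by rwa [cancel])
    rwa [cancel] at this
  simpa using withDensity_le_of_forall_exists_smul ν hv hvα hm hα le_rfl three_pos
    (continuous_sphereDeviation x₀).measurable (isClosed_frontier.measurableSet.inter hS)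
    (addHaar_inter_preimage_sphereDeviation_zero ν x₀ _) hit

theorem withDensity_inter_preimage_smul_diff_le :
    ν.withDensity (fun y => v y) ((ball x₀ 1 ∩ S ∩ (fun y => (4⁻¹ : ℝ) • y) ⁻¹' E) \ E) ≤
      4 * tubeConst ν 4 * 2 * (4 ^ α : ℝ≥0) *
        ∫⁻ z in frontier E ∩ S, sphereDeviation x₀ z * v z ∂μH[m] := by
  have hit : ∀ y ∈ (ball x₀ 1 ∩ S ∩ (fun y => (4⁻¹ : ℝ) • y) ⁻¹' E) \ E,
      ∃ z ∈ frontier E ∩ S, ∃ t : ℝ≥0,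
        0 < t ∧ t ≤ 4 ∧ (t : ℝ) • z = y ∧ dist y z ≤ (2 : ℝ≥0) * sphereDeviation x₀ z := by
    rintro y ⟨⟨⟨hy, hyS⟩, hyE⟩, hyE'⟩
    obtain ⟨s, ⟨hs4, hs1⟩, hs⟩ := exists_mem_Icc_mem_frontier (E := E)
      (γ := fun s : ℝ => s • y) (by fun_prop) (by norm_num : (4⁻¹ : ℝ) ≤ 1) hyE
      (by simpa using hyE')
    have hs0 : 0 < s := by linarith
    lift s to ℝ≥0 using hs0.le
    refine ⟨(s : ℝ) • y, ⟨hs, hScone y hyS s hs0⟩, s⁻¹, inv_pos.2 hs0, ?_, ?_, ?_⟩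
    · exact inv_le_of_inv_le₀ (by simp) (by exact_mod_cast hs4)
    · rw [NNReal.coe_inv, inv_smul_smul₀ hs0.ne']
    · rw [dist_comm]
      exact dist_smul_self_le_of_le_one hx₀ ⟨hs0.le, hs1⟩ (mem_ball_iff_norm.1 hy).le
  exact withDensity_le_of_forall_exists_smul ν hv hvα hm hα (by norm_num) two_pos
    (continuous_sphereDeviation x₀).measurable (isClosed_frontier.measurableSet.inter hS)
    (addHaar_inter_preimage_sphereDeviation_zero ν x₀ _) hit

variable (hSconv : Convex ℝ S) {κ : ℝ≥0}
  (hvκ : ∀ x ∈ S, ∀ y ∈ S, ∀ t ∈ Icc (1 / 2 : ℝ) 1, v y ≤ κ * v (AffineMap.lineMap x y t))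
  (hfin : ν.withDensity (fun y => v y) (ball 0 (1 / 2) ∩ S) ≠ ∞) (hE : MeasurableSet E)
  (half : ν.withDensity (fun y => v y) (ball 0 (1 / 2) ∩ S) ≤
    2 * ν.withDensity (fun y => v y) (ball 0 (1 / 2) ∩ S ∩ E))
include hSconv hvκ hfin hE half

omit hvα hα hScone in
theorem withDensity_half_ball_diff_le :
    ν.withDensity (fun y => v y) ((ball 0 (1 / 2) ∩ S) \ E) ≤
      32 * tubeConst ν 2 * κ * ∫⁻ z in frontier E ∩ S, sphereDeviation x₀ z * v z ∂μH[m] := by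
  have deviation_large : ∀ z ∈ ball (0 : V) (1 / 2), 1 ≤ 4 * sphereDeviation x₀ z := by
    intro z hz
    rw [← NNReal.coe_le_coe]
    push_cast
    rw [mem_ball_zero_iff] at hz
    linarith [neg_le_abs (‖z - x₀‖ - 1), coe_sphereDeviation x₀ z, norm_sub_le z x₀]
  have weight_le : ∫⁻ z in frontier E ∩ (ball 0 (1 / 2) ∩ S), v z ∂μH[m] ≤
      4 * ∫⁻ z in frontier E ∩ S, sphereDeviation x₀ z * v z ∂μH[m] :=
    calc ∫⁻ z in frontier E ∩ (ball 0 (1 / 2) ∩ S), v z ∂μH[m]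
        ≤ ∫⁻ z in frontier E ∩ (ball 0 (1 / 2) ∩ S), 4 * (sphereDeviation x₀ z * v z) ∂μH[m] := by
          refine setLIntegral_mono' (isClosed_frontier.measurableSet.inter
            (measurableSet_ball.inter hS)) fun z hz => ?_
          rw [← mul_assoc]
          exact le_mul_of_one_le_left' (by exact_mod_cast deviation_large z hz.2.1)
      _ ≤ ∫⁻ z in frontier E ∩ S, 4 * (sphereDeviation x₀ z * v z) ∂μH[m] :=
          lintegral_mono_set (inter_subset_inter_right _ inter_subset_right)
      _ = _ := lintegral_const_mul' _ _ (by simp)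
  have dist_le : ∀ x ∈ ball (0 : V) (1 / 2) ∩ S, ∀ y ∈ ball (0 : V) (1 / 2) ∩ S,
      dist x y ≤ (1 : ℝ≥0) := fun x hx y hy => by
    have := dist_triangle_right x y 0
    push_cast
    linarith [mem_ball.1 hx.1, mem_ball.1 hy.1]
  calc ν.withDensity (fun y => v y) ((ball 0 (1 / 2) ∩ S) \ E)
      ≤ 2 * (4 * tubeConst ν 2 * (1 : ℝ≥0) * κ *
          ∫⁻ z in frontier E ∩ (ball 0 (1 / 2) ∩ S), v z ∂μH[m]) :=
        withDensity_diff_le_of_le_two_mul ν hm ((convex_ball 0 _).inter hSconv)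
          (measurableSet_ball.inter hS) one_pos dist_le hv
          (fun x hx y hy => hvκ x hx.2 y hy.2) hfin hE half
    _ ≤ 2 * (4 * tubeConst ν 2 * (1 : ℝ≥0) * κ *
          (4 * ∫⁻ z in frontier E ∩ S, sphereDeviation x₀ z * v z ∂μH[m])) := by gcongr
    _ = _ := by
        rw [ENNReal.coe_one]
        ring

theorem withDensity_ball_diff_le :
    ν.withDensity (fun y => v y) ((ball x₀ 1 ∩ S) \ E) ≤
      ((4 ^ α * 4 ^ Module.finrank ℝ V : ℝ≥0) * (32 * tubeConst ν 2 * κ) +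
        4 * tubeConst ν 4 * 2 * (4 ^ α : ℝ≥0)) *
        ∫⁻ z in frontier E ∩ S, sphereDeviation x₀ z * v z ∂μH[m] := by
  have hY : MeasurableSet ((ball 0 (1 / 2) ∩ S) \ E) := (measurableSet_ball.inter hS).diff hE
  have cover : (ball x₀ 1 ∩ S) \ E ⊆
      (fun y => (4⁻¹ : ℝ) • y) ⁻¹' ((ball 0 (1 / 2) ∩ S) \ E) ∪
        (ball x₀ 1 ∩ S ∩ (fun y => (4⁻¹ : ℝ) • y) ⁻¹' E) \ E := by
    rintro y ⟨⟨hy, hyS⟩, hyE⟩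
    by_cases hyE' : (4⁻¹ : ℝ) • y ∈ E
    · exact Or.inr ⟨⟨⟨hy, hyS⟩, hyE'⟩, hyE⟩
    · refine Or.inl ⟨⟨?_, hScone y hyS _ (by norm_num)⟩, hyE'⟩
      rw [mem_ball_iff_norm] at hy
      rw [mem_ball_zero_iff, norm_smul, Real.norm_of_nonneg (by norm_num)]
      linarith [norm_le_norm_sub_add y x₀]
  have rescaled := withDensity_preimage_smul ν hv hvα (r := 4⁻¹) (by simp) hY
  rw [inv_inv, NNReal.coe_inv, NNReal.coe_ofNat] at rescaled
  refine (measure_mono cover).trans <| (measure_union_le _ _).trans ?_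
  rw [rescaled, add_mul, mul_assoc]
  gcongr
  · exact withDensity_half_ball_diff_le ν hv hm hS hx₀ hSconv hvκ hfin hE half
  · exact withDensity_inter_preimage_smul_diff_le ν hv hvα hm hα hS hScone hx₀

theorem withDensity_symmDiff_ball_le (hES : E ⊆ S) (hE_bdd : Bornology.IsBounded E) :
    ν.withDensity (fun y => v y) (symmDiff E (ball x₀ 1 ∩ S)) ≤
      ballConst ν α κ * ∫⁻ z in frontier E ∩ S, sphereDeviation x₀ z * v z ∂μH[m] := by
  have outer_eq : E \ (ball x₀ 1 ∩ S) = E \ ball x₀ 1 := by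
    rw [sdiff_inter, sdiff_eq_empty.2 hES, union_empty]
  refine (measure_union_le _ _).trans ?_
  rw [ballConst, add_mul, outer_eq]
  exact add_le_add (withDensity_diff_ball_le ν hv hvα hm hα hS hScone hx₀ hES hE_bdd)
    (withDensity_ball_diff_le ν hv hvα hm hα hS hScone hx₀ hSconv hvκ hfin hE half)

end Cone

section LevelSet

variable {V : Type*} [NormedAddCommGroup V] [NormedSpace ℝ V] [FiniteDimensional ℝ V]
  [MeasurableSpace V] [BorelSpace V]

theorem finiteAtFilter_hausdorffMeasure_levelSet {F : Type*} [NormedAddCommGroup F]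
    [NormedSpace ℝ F] [FiniteDimensional ℝ F] {f : V → F} {f' : V →L[ℝ] F} {a : V}
    (hf : HasStrictFDerivAt f f' a) (hf' : f'.range = ⊤) :
    (μH[Module.finrank ℝ f'.ker] : Measure V).FiniteAtFilter (𝓝[f ⁻¹' {f a}] a) := by
  have : CompleteSpace V := FiniteDimensional.complete ℝ V
  set φ := hf.implicitToOpenPartialHomeomorph f f' hf'
  set ψ := hf.implicitFunction f f' hf' (f a)
  obtain ⟨K, U, hU, hK⟩ := (hf.to_implicitFunction hf').exists_lipschitzOnWith
  have finite_param : (μH[Module.finrank ℝ f'.ker] : Measure f'.ker).FiniteAtFilter (𝓝 0) :=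
    Measure.finiteAt_nhds _ _
  obtain ⟨W, hW, hW_fin⟩ := finite_param
  have param_mem : ∀ᶠ x in 𝓝 a, (φ x).2 ∈ U ∩ W := by
    have tendsto_param : Filter.Tendsto (fun x => (φ x).2) (𝓝 a) (𝓝 0) := by
      have := (φ.continuousAt (hf.mem_implicitToOpenPartialHomeomorph_source hf')).snd
      rwa [ContinuousAt, hf.implicitToOpenPartialHomeomorph_self hf'] at this
    exact tendsto_param (Filter.inter_mem hU hW)
  have level_subset : ψ '' (U ∩ W) ∈ 𝓝[f ⁻¹' {f a}] a := by
    filter_upwards [nhdsWithin_le_nhds (hf.eq_implicitFunction hf'),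
      nhdsWithin_le_nhds param_mem, self_mem_nhdsWithin] with x hx hxUW hfx
    rw [mem_preimage, mem_singleton_iff] at hfx
    exact ⟨(φ x).2, hxUW, by rwa [hfx] at hx⟩
  refine ⟨_, level_subset, ?_⟩
  calc μH[Module.finrank ℝ f'.ker] (ψ '' (U ∩ W))
      ≤ (K : ℝ≥0∞) ^ (Module.finrank ℝ f'.ker : ℝ) * μH[Module.finrank ℝ f'.ker] (U ∩ W) :=
        (hK.mono inter_subset_left).hausdorffMeasure_image_le (Nat.cast_nonneg _)
    _ < ∞ := ENNReal.mul_lt_top (ENNReal.rpow_lt_top_of_nonneg (Nat.cast_nonneg _) (by simp))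
        ((measure_mono inter_subset_right).trans_lt hW_fin)

theorem hausdorffMeasure_levelSet_lt_top {m : ℕ} (hm : Module.finrank ℝ V = m + 1) {f : V → ℝ}
    (hf : ContDiff ℝ 1 f) {c : ℝ} (hc : IsCompact (f ⁻¹' {c}))
    (hf' : ∀ x ∈ f ⁻¹' {c}, fderiv ℝ f x ≠ 0) : μH[m] (f ⁻¹' {c}) < ∞ := by
  refine hc.measure_lt_top_of_nhdsWithin fun a ha => ?_
  have derivative_ne_zero : (fderiv ℝ f a : V →ₗ[ℝ] ℝ) ≠ 0 :=
    fun h => hf' a ha (ContinuousLinearMap.coe_injective h)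
  have dim_ker : Module.finrank ℝ (fderiv ℝ f a).ker = m := by
    have := Module.Dual.finrank_ker_add_one_of_ne_zero derivative_ne_zero
    lia
  have := finiteAtFilter_hausdorffMeasure_levelSet
    (hf.contDiffAt.hasStrictFDerivAt one_ne_zero)
    (LinearMap.range_eq_top.2 (LinearMap.surjective derivative_ne_zero))
  rwa [dim_ker, show f a = c from ha] at this

end LevelSet

theorem le_two_mul_lineMap_of_concaveOn {V : Type*} [AddCommGroup V] [Module ℝ V] {S : Set V}
    {u : V → ℝ} (hu : ConcaveOn ℝ S u) (hu0 : ∀ x ∈ S, 0 ≤ u x) {x y : V} (hx : x ∈ S) (hy : y ∈ S)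
    {t : ℝ} (ht : t ∈ Icc (1 / 2 : ℝ) 1) : u y ≤ 2 * u (AffineMap.lineMap x y t) := by
  have concave := hu.2 hx hy (sub_nonneg.2 ht.2) (by linarith [ht.1]) (sub_add_cancel 1 t)
  rw [← AffineMap.lineMap_apply_module x y t, smul_eq_mul, smul_eq_mul] at concave
  linarith [mul_nonneg (sub_nonneg.2 ht.2) (hu0 x hx), mul_le_mul_of_nonneg_right ht.1 (hu0 y hy)]

theorem HasSmoothBoundary.hausdorffMeasure_frontier_lt_top {n : ℕ} (hn : 1 ≤ n) {E : Set (Euc n)}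
    (hE : HasSmoothBoundary E) (hE_bdd : Bornology.IsBounded E) :
    μH[(n : ℝ) - 1] (frontier E) < ∞ := by
  obtain ⟨m, rfl⟩ := Nat.exists_eq_add_of_le' hn
  obtain ⟨f, hf, -, hfr, hf'⟩ := hE
  have compact : IsCompact (frontier E) := isCompact_of_isClosed_isBounded isClosed_frontier
    (hE_bdd.closure.subset frontier_subset_closure)
  rw [hfr] at compact hf' ⊢
  rw [Nat.cast_succ, add_sub_cancel_right]
  exact hausdorffMeasure_levelSet_lt_top finrank_euclideanSpace_fin (hf.of_le (by simp)) compact hf'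

section ConeWeight

variable {n : ℕ}

/-- The density of the weighted volume: the weight `w` cut off outside the cone `S`, with values
in `ℝ≥0`. -/
def coneWeight (S : Set (Euc n)) (w : Euc n → ℝ) : Euc n → ℝ≥0 :=
  S.indicator fun x => (w x).toNNReal

variable {S : Set (Euc n)} {w : Euc n → ℝ}

theorem coneWeight_of_mem {x : Euc n} (hx : x ∈ S) : coneWeight S w x = (w x).toNNReal :=
  indicator_of_mem hx _

theorem wVol_eq_withDensity_coneWeight {A : Set (Euc n)} (hA : MeasurableSet A) (hAS : A ⊆ S) :
    wVol w A = volume.withDensity (fun x => (coneWeight S w x : ℝ≥0∞)) A := by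
  rw [withDensity_apply _ hA]
  exact setLIntegral_congr_fun hA fun x hx => by
    rw [coneWeight_of_mem (hAS hx), ENNReal.ofReal]

theorem lintegral_sphereDeviation_mul_coneWeight (x₀ : Euc n) {F : Set (Euc n)}
    (hF : MeasurableSet F) (hFS : F ⊆ S) (μ : Measure (Euc n)) :
    ∫⁻ z in F, sphereDeviation x₀ z * coneWeight S w z ∂μ =
      ∫⁻ z in F, ENNReal.ofReal (|‖z - x₀‖ - 1| * w z) ∂μ :=
  setLIntegral_congr_fun hF fun z hz => by
    rw [ENNReal.ofReal_mul (abs_nonneg _), coneWeight_of_mem (hFS hz), ← coe_sphereDeviation,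
      ENNReal.ofReal_coe_nnreal, ENNReal.ofReal]

theorem wVol_ne_top (hw : ContinuousOn w (closure S)) {A : Set (Euc n)}
    (hA : Bornology.IsBounded A) (hAS : A ⊆ closure S) : wVol w A ≠ ∞ := by
  obtain ⟨M, hM⟩ := hA.isCompact_closure.bddAbove_image
    (hw.mono (closure_minimal hAS isClosed_closure))
  have le_bound : ∀ x ∈ A, w x ≤ M := fun x hx => hM (mem_image_of_mem w (subset_closure hx))
  have le_mul : wVol w A ≤ ENNReal.ofReal M * volume A := calc
    wVol w A ≤ ∫⁻ _ in A, ENNReal.ofReal M :=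
      setLIntegral_mono measurable_const fun x hx => ENNReal.ofReal_le_ofReal (le_bound x hx)
    _ = ENNReal.ofReal M * volume A := setLIntegral_const _ _
  exact ne_top_of_le_ne_top (ENNReal.mul_ne_top ENNReal.ofReal_ne_top hA.measure_lt_top.ne) le_mul

theorem ofReal_setIntegral_deviation_mul (hw : ContinuousOn w (closure S))
    (hw0 : ∀ x ∈ closure S, 0 ≤ w x) (x₀ : Euc n) {F : Set (Euc n)} (hFm : MeasurableSet F)
    (hF : Bornology.IsBounded F) (hFS : F ⊆ closure S) {μ : Measure (Euc n)} (hFμ : μ F < ∞) :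
    ENNReal.ofReal (∫ z in F, |‖z - x₀‖ - 1| * w z ∂μ) =
      ∫⁻ z in F, ENNReal.ofReal (|‖z - x₀‖ - 1| * w z) ∂μ := by
  have continuousOn : ContinuousOn (fun z => |‖z - x₀‖ - 1| * w z) (closure S) :=
    (by fun_prop : Continuous fun z : Euc n => |‖z - x₀‖ - 1|).continuousOn.mul hw
  have nonneg : ∀ᵐ z ∂μ.restrict F, 0 ≤ |‖z - x₀‖ - 1| * w z :=
    ae_restrict_of_forall_mem hFm fun z hz => mul_nonneg (abs_nonneg _) (hw0 z (hFS hz))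
  obtain ⟨M, hM⟩ := hF.isCompact_closure.exists_bound_of_continuousOn
    (continuousOn.mono (closure_minimal hFS isClosed_closure))
  refine ofReal_integral_eq_lintegral_ofReal ?_ nonneg
  exact IntegrableOn.of_bound hFμ ((continuousOn.mono hFS).aestronglyMeasurable hFm) M
    (ae_restrict_of_forall_mem hFm fun z hz => hM z (subset_closure hz))

variable {α : ℝ} (hS : IsOpenConvexCone S) (hw : IsAdmissibleWeight S α w)
include hS hw

theorem measurable_coneWeight : Measurable (coneWeight S w) := by
  classical
  rw [coneWeight, ← piecewise_eq_indicator]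
  exact (continuous_real_toNNReal.comp_continuousOn
    (hw.1.mono subset_closure)).measurable_piecewise continuousOn_const hS.1.measurableSet

theorem coneWeight_smul {t : ℝ≥0} (ht : 0 < t) (x : Euc n) :
    coneWeight S w ((t : ℝ) • x) = t ^ α * coneWeight S w x := by
  by_cases hx : x ∈ S
  · rw [coneWeight_of_mem hx, coneWeight_of_mem (hS.2.2 x hx t ht),
      hw.2.2.2.1 x (subset_closure hx) t ht, Real.toNNReal_mul (by positivity),
      ← NNReal.coe_rpow, Real.toNNReal_coe]
  · have htx : (t : ℝ) • x ∉ S := fun h => hx <| by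
      simpa [ht.ne'] using hS.2.2 _ h (t : ℝ)⁻¹ (by positivity)
    simp [coneWeight, hx, htx]

theorem coneWeight_le_mul_lineMap (hα : 0 < α) {x y : Euc n} (hx : x ∈ S) (hy : y ∈ S) {t : ℝ}
    (ht : t ∈ Icc (1 / 2 : ℝ) 1) :
    coneWeight S w y ≤ 2 ^ α * coneWeight S w (AffineMap.lineMap x y t) := by
  have nonneg : ∀ z ∈ S, 0 ≤ w z := fun z hz => hw.2.1 z (subset_closure hz)
  have hz : AffineMap.lineMap x y t ∈ S := hS.2.1.lineMap_mem hx hy ⟨by linarith [ht.1], ht.2⟩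
  have root_le := le_two_mul_lineMap_of_concaveOn hw.2.2.2.2
    (fun z hz => Real.rpow_nonneg (nonneg z hz) _) hx hy ht
  rw [coneWeight_of_mem hy, coneWeight_of_mem hz, ← NNReal.coe_le_coe]
  push_cast
  rw [Real.coe_toNNReal _ (nonneg y hy), Real.coe_toNNReal _ (nonneg _ hz)]
  calc w y = (w y ^ (1 / α)) ^ α := by
        rw [one_div, Real.rpow_inv_rpow (nonneg y hy) hα.ne']
    _ ≤ (2 * w (AffineMap.lineMap x y t) ^ (1 / α)) ^ α :=
        Real.rpow_le_rpow (Real.rpow_nonneg (nonneg y hy) _) root_le hα.le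
    _ = 2 ^ α * w (AffineMap.lineMap x y t) := by
        rw [Real.mul_rpow zero_le_two (Real.rpow_nonneg (nonneg _ hz) _), one_div,
          Real.rpow_inv_rpow (nonneg _ hz) hα.ne']

theorem wVol_symmDiff_ball_le (hn : 1 ≤ n) (hα : 0 < α) {E : Set (Euc n)} (hES : E ⊆ S)
    (hE : MeasurableSet E) (hE_bdd : Bornology.IsBounded E)
    (half : wVol w (ball (0 : Euc n) (1 / 2) ∩ S) ≤ 2 * wVol w (E ∩ ball (0 : Euc n) (1 / 2)))
    {x₀ : Euc n} (hx₀ : ‖x₀‖ ≤ 1 / 8) :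
    wVol w (symmDiff E (ball x₀ 1 ∩ S)) ≤ ballConst (volume : Measure (Euc n)) α (2 ^ α) *
      ∫⁻ x in frontier E ∩ S, ENNReal.ofReal (|‖x - x₀‖ - 1| * w x) ∂μH[(n : ℝ) - 1] := by
  obtain ⟨m, rfl⟩ := Nat.exists_eq_add_of_le' hn
  have hSm : MeasurableSet S := hS.1.measurableSet
  set B : Set (Euc (m + 1)) := ball 0 (1 / 2) ∩ S
  have hB : MeasurableSet B := measurableSet_ball.inter hSm
  have hB_fin : wVol w B ≠ ∞ := wVol_ne_top hw.1 (isBounded_ball.subset inter_subset_left)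
    (inter_subset_right.trans subset_closure)
  have inter_ball : E ∩ ball 0 (1 / 2) = B ∩ E := by
    rw [inter_assoc, inter_eq_right.2 hES, inter_comm]
  rw [wVol_eq_withDensity_coneWeight hB inter_subset_right] at half hB_fin
  rw [inter_ball, wVol_eq_withDensity_coneWeight (hB.inter hE) (inter_subset_right.trans hES)]
    at half
  rw [wVol_eq_withDensity_coneWeight (hE.symmDiff (measurableSet_ball.inter hSm))
      (symmDiff_subset_union.trans (union_subset hES inter_subset_right)),
    Nat.cast_succ, add_sub_cancel_right, ← lintegral_sphereDeviation_mul_coneWeight x₀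
      (isClosed_frontier.measurableSet.inter hSm) inter_subset_right]
  exact withDensity_symmDiff_ball_le volume (measurable_coneWeight hS hw)
    (fun t ht x => coneWeight_smul hS hw ht x) finrank_euclideanSpace_fin hα.le hSm hS.2.2 hx₀
    hS.2.1 (fun x hx y hy t ht => coneWeight_le_mul_lineMap hS hw hα hx hy ht) hB_fin hE half
    hES hE_bdd

theorem ofReal_setIntegral_frontier_inter (hn : 1 ≤ n) {E : Set (Euc n)}
    (hE_bdd : Bornology.IsBounded E) (hE : HasSmoothBoundary E) (x₀ : Euc n) :
    ENNReal.ofReal (∫ x in frontier E ∩ S, |‖x - x₀‖ - 1| * w x ∂μH[(n : ℝ) - 1]) =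
      ∫⁻ x in frontier E ∩ S, ENNReal.ofReal (|‖x - x₀‖ - 1| * w x) ∂μH[(n : ℝ) - 1] :=
  ofReal_setIntegral_deviation_mul hw.1 hw.2.1 x₀
    (isClosed_frontier.measurableSet.inter hS.1.measurableSet)
    (hE_bdd.closure.subset (inter_subset_left.trans frontier_subset_closure))
    (inter_subset_right.trans subset_closure)
    ((measure_mono inter_subset_left).trans_lt (hE.hausdorffMeasure_frontier_lt_top hn hE_bdd))

end ConeWeight

theorem stmt_16_general {n : ℕ} (hn : 1 ≤ n) (α : ℝ) (hα : 0 < α) :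
    ∃ ε₀ C : ℝ, 0 < ε₀ ∧ 0 < C ∧
      ∀ S : Set (Euc n), IsOpenConvexCone S →
      ∀ w : Euc n → ℝ, IsAdmissibleWeight S α w →
      ∀ E : Set (Euc n), E ⊆ S → MeasurableSet E → Bornology.IsBounded E →
        wVol w (ball (0 : Euc n) (1 / 2) ∩ S) ≤ 2 * wVol w (E ∩ ball (0 : Euc n) (1 / 2)) →
      ∀ x₀ : Euc n, ‖x₀‖ ≤ ε₀ →
        wVol w (symmDiff E (ball x₀ 1 ∩ S)) ≤
          ENNReal.ofReal C *
            ∫⁻ x in frontier E ∩ S, ENNReal.ofReal (|‖x - x₀‖ - 1| * w x) ∂μH[(n : ℝ) - 1] := by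
  refine ⟨1 / 8, (ballConst (volume : Measure (Euc n)) α (2 ^ α)).toReal, by norm_num,
    ENNReal.toReal_pos (ballConst_ne_zero _ _ _) (ballConst_ne_top _ _ _), ?_⟩
  intro S hS w hw E hES hE hE_bdd half x₀ hx₀
  rw [ENNReal.ofReal_toReal (ballConst_ne_top _ _ _)]
  exact wVol_symmDiff_ball_le hS hw hn hα hES hE hE_bdd half hx₀

/-- "Spherical boundary implies ball": if `E` fills half of `B_{1/2} ∩ Σ`, then the
symmetric difference with a slightly translated unit ball is controlled by how far
`∂E ∩ Σ` is from the unit sphere centered at `x₀`. The constants depend only on `n, α`. -/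
theorem stmt_16 {n : ℕ} (hn : 1 ≤ n) (α : ℝ) (hα : 0 < α) :
    ∃ ε₀ C : ℝ, 0 < ε₀ ∧ 0 < C ∧
      ∀ S : Set (Euc n), IsOpenConvexCone S →
      ∀ w : Euc n → ℝ, IsAdmissibleWeight S α w →
        wVol w (ball (0 : Euc n) 1 ∩ S) = 1 →
      ∀ E : Set (Euc n), E ⊆ S → IsOpen E → Bornology.IsBounded E → HasSmoothBoundary E →
        wVol w (ball (0 : Euc n) (1 / 2) ∩ S) ≤ 2 * wVol w (E ∩ ball (0 : Euc n) (1 / 2)) →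
      ∀ x₀ : Euc n, ‖x₀‖ ≤ ε₀ →
        wVol w (symmDiff E (ball x₀ 1 ∩ S)) ≤
          ENNReal.ofReal
            (C * ∫ x in frontier E ∩ S, |‖x - x₀‖ - 1| * w x ∂(μH[(n : ℝ) - 1])) := by
  obtain ⟨ε₀, C, hε₀, hC, bound⟩ := stmt_16_general hn α hα
  refine ⟨ε₀, C, hε₀, hC, fun S hS w hw _ E hES hE hE_bdd hE_smooth half x₀ hx₀ => ?_⟩
  rw [ENNReal.ofReal_mul hC.le, ofReal_setIntegral_frontier_inter hS hw hn hE_bdd hE_smooth]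
  exact bound S hS w hw E hES hE.measurableSet hE_bdd half x₀ hx₀
end
end
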